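/- arXiv:1803.09501 — 9 statements merged into one kernel-verified Lean document; each statement's English description precedes it below -/
import Mathlib

section
/- Suppose X and Y are independent and identically distributed H-valued random elements with Bochner mean E X = 0 and E‖X‖² < ∞. Then E[⟨X,Y⟩²] = Σ_{i,j∈ℕ} ( E[⟨X,e_i⟩·⟨X,e_j⟩] )² for every Hilbert (orthonormal) basis (e_i)_{i∈ℕ} of H. (The right-hand side is the squared Hilbert–Schmidt norm ‖E[X ⊗ X]‖₂² of the covariance operator of X.) -/
open MeasureTheory ProbabilityTheory Filter Finset Topology
open scoped NNReal RealInnerProductSpace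

noncomputable section

/-!
Write `xᵢ = ⟪eᵢ, x⟫`. By Parseval, `‖⟪x, y⟫‖² = ⟪y, x⟫ * ⟪x, y⟫` is a double series whose `(i, j)`
term is the `(i, j)` matrix entry of `x ⊗ x` times the `(j, i)` entry of `y ⊗ y`. By AM-GM that
term is at most `(|xᵢ|²|yⱼ|² + |yᵢ|²|xⱼ|²) / 2` in absolute value, and these bounds sum to exactly
`‖x‖²‖y‖²`, which is integrable at `(X, Y)` by independence. Dominated convergence then lets the
expectation act term by term, where independence splits each product.
-/

section

open scoped InnerProductSpace

theorem hasSum_mul_prod_of_finiteDimensional {ι κ R : Type*} [NormedRing R] [NormedAlgebra ℝ R]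
    [FiniteDimensional ℝ R] {f : ι → R} {g : κ → R} {s t : R} (hf : HasSum f s)
    (hg : HasSum g t) : HasSum (fun q : ι × κ ↦ f q.1 * g q.2) (s * t) :=
  have : CompleteSpace R := FiniteDimensional.complete ℝ R
  hf.mul hg (summable_mul_of_summable_norm hf.summable.norm hg.summable.norm)

theorem integrable_sq_norm_mul_sq_norm_of_indepFun {E F Ω : Type*}
    [NormedAddCommGroup E] [MeasurableSpace E] [OpensMeasurableSpace E]
    [NormedAddCommGroup F] [MeasurableSpace F] [OpensMeasurableSpace F]
    [MeasurableSpace Ω] {μ : Measure Ω} {X : Ω → E} {Y : Ω → F}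
    (hXY : IndepFun X Y μ) (hX : MemLp X 2 μ) (hY : MemLp Y 2 μ) :
    Integrable (fun ω ↦ ‖X ω‖ ^ 2 * ‖Y ω‖ ^ 2) μ :=
  have hE : Measurable fun x : E ↦ ‖x‖ ^ 2 := by fun_prop
  have hF : Measurable fun y : F ↦ ‖y‖ ^ 2 := by fun_prop
  (hXY.comp hE hF).integrable_mul (hX.integrable_norm_pow two_ne_zero)
    (hY.integrable_norm_pow two_ne_zero)

variable {ι 𝕜 E : Type*} [RCLike 𝕜] [NormedAddCommGroup E] [InnerProductSpace 𝕜 E]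

theorem hasSum_sq_norm_inner_hilbertBasis (b : HilbertBasis ι 𝕜 E) (x : E) :
    HasSum (fun i ↦ ‖⟪b i, x⟫_𝕜‖ ^ 2) (‖x‖ ^ 2) := by
  simpa [b.repr_apply_apply] using lp.hasSum_norm (p := 2) (by simp) (b.repr x)

theorem hasSum_half_symm_sq_norm_inner_mul (b : HilbertBasis ι 𝕜 E) (x y : E) :
    HasSum (fun q : ι × ι ↦ (‖⟪b q.1, x⟫_𝕜‖ ^ 2 * ‖⟪b q.2, y⟫_𝕜‖ ^ 2 +
      ‖⟪b q.1, y⟫_𝕜‖ ^ 2 * ‖⟪b q.2, x⟫_𝕜‖ ^ 2) / 2) (‖x‖ ^ 2 * ‖y‖ ^ 2) := by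
  have hx := hasSum_sq_norm_inner_hilbertBasis b x
  have hy := hasSum_sq_norm_inner_hilbertBasis b y
  have hsymm := ((hasSum_mul_prod_of_finiteDimensional hx hy).add
    (hasSum_mul_prod_of_finiteDimensional hy hx)).div_const 2
  rwa [mul_comm (‖y‖ ^ 2), add_self_div_two] at hsymm

theorem norm_inner_mul_inner_mul_le_half_symm_sq (u v x y : E) :
    ‖(⟪u, x⟫_𝕜 * ⟪x, v⟫_𝕜) * (⟪v, y⟫_𝕜 * ⟪y, u⟫_𝕜)‖ ≤
      (‖⟪u, x⟫_𝕜‖ ^ 2 * ‖⟪v, y⟫_𝕜‖ ^ 2 + ‖⟪u, y⟫_𝕜‖ ^ 2 * ‖⟪v, x⟫_𝕜‖ ^ 2) / 2 := by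
  simp only [norm_mul, norm_inner_symm x v, norm_inner_symm y u]
  linarith [two_mul_le_add_sq (‖⟪u, x⟫_𝕜‖ * ‖⟪v, y⟫_𝕜‖) (‖⟪u, y⟫_𝕜‖ * ‖⟪v, x⟫_𝕜‖)]

theorem hasSum_inner_mul_inner_eq_sq_norm_inner (b : HilbertBasis ι 𝕜 E) (x y : E) :
    HasSum (fun q : ι × ι ↦
      (⟪b q.1, x⟫_𝕜 * ⟪x, b q.2⟫_𝕜) * (⟪b q.2, y⟫_𝕜 * ⟪y, b q.1⟫_𝕜))
      ((‖⟪x, y⟫_𝕜‖ ^ 2 : ℝ) : 𝕜) := by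
  have hprod := hasSum_mul_prod_of_finiteDimensional
    (b.hasSum_inner_mul_inner y x) (b.hasSum_inner_mul_inner x y)
  have hsq : ⟪y, x⟫_𝕜 * ⟪x, y⟫_𝕜 = ((‖⟪x, y⟫_𝕜‖ ^ 2 : ℝ) : 𝕜) := by
    rw [← inner_conj_symm, RCLike.conj_mul, RCLike.ofReal_pow]
  rw [← hsq]
  exact hprod.congr_fun fun q ↦ by ring

variable {Ω : Type*} [MeasurableSpace Ω] {μ : Measure Ω} {X Y : Ω → E}

theorem integral_inner_mul_inner_mul_swap_eq_sq_norm (u v : E) :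
    (∫ ω, ⟪u, X ω⟫_𝕜 * ⟪X ω, v⟫_𝕜 ∂μ) * ∫ ω, ⟪v, X ω⟫_𝕜 * ⟪X ω, u⟫_𝕜 ∂μ =
      ((‖∫ ω, ⟪u, X ω⟫_𝕜 * ⟪X ω, v⟫_𝕜 ∂μ‖ ^ 2 : ℝ) : 𝕜) := by
  have hconj : ∫ ω, ⟪v, X ω⟫_𝕜 * ⟪X ω, u⟫_𝕜 ∂μ =
      starRingEnd 𝕜 (∫ ω, ⟪u, X ω⟫_𝕜 * ⟪X ω, v⟫_𝕜 ∂μ) := by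
    simp only [← integral_conj, map_mul, inner_conj_symm, mul_comm]
  rw [hconj, RCLike.mul_conj, RCLike.ofReal_pow]

variable [MeasurableSpace E] [BorelSpace E]

/-- The double series is `tr (E[X ⊗ X] E[Y ⊗ Y])` written in the basis `b`. -/
theorem hasSum_integral_mul_integral_of_indepFun [Countable ι] (b : HilbertBasis ι 𝕜 E)
    (hXY : IndepFun X Y μ) (hX : MemLp X 2 μ) (hY : MemLp Y 2 μ) :
    HasSum (fun q : ι × ι ↦
      (∫ ω, ⟪b q.1, X ω⟫_𝕜 * ⟪X ω, b q.2⟫_𝕜 ∂μ) * ∫ ω, ⟪b q.2, Y ω⟫_𝕜 * ⟪Y ω, b q.1⟫_𝕜 ∂μ)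
      ((∫ ω, ‖⟪X ω, Y ω⟫_𝕜‖ ^ 2 ∂μ : ℝ) : 𝕜) := by
  have hcont (u v : E) : Continuous fun x : E ↦ ⟪u, x⟫_𝕜 * ⟪x, v⟫_𝕜 := by fun_prop
  have hX' := hX.aestronglyMeasurable
  have hY' := hY.aestronglyMeasurable
  have hsplit (q : ι × ι) := hXY.integral_fun_comp_mul_comp hX'.aemeasurable hY'.aemeasurable
    (hcont (b q.1) (b q.2)).aestronglyMeasurable (hcont (b q.2) (b q.1)).aestronglyMeasurable
  simp only [← hsplit, ← integral_ofReal]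
  refine hasSum_integral_of_dominated_convergence
    (fun q ω ↦ (‖⟪b q.1, X ω⟫_𝕜‖ ^ 2 * ‖⟪b q.2, Y ω⟫_𝕜‖ ^ 2 +
      ‖⟪b q.1, Y ω⟫_𝕜‖ ^ 2 * ‖⟪b q.2, X ω⟫_𝕜‖ ^ 2) / 2)
    (fun q ↦ ((hcont _ _).comp_aestronglyMeasurable hX').mul
      ((hcont _ _).comp_aestronglyMeasurable hY'))
    (fun q ↦ ae_of_all _ fun ω ↦ norm_inner_mul_inner_mul_le_half_symm_sq _ _ _ _)
    (ae_of_all _ fun ω ↦ (hasSum_half_symm_sq_norm_inner_mul b _ _).summable)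
    ?_
    (ae_of_all _ fun ω ↦ hasSum_inner_mul_inner_eq_sq_norm_inner b _ _)
  simpa only [(hasSum_half_symm_sq_norm_inner_mul b _ _).tsum_eq] using
    integrable_sq_norm_mul_sq_norm_of_indepFun hXY hX hY

theorem integral_inner_sq_eq_covariance_HS_normSq_general [Countable ι] (b : HilbertBasis ι 𝕜 E)
    (hXY : IndepFun X Y μ) (hident : IdentDistrib X Y μ μ) (hX : MemLp X 2 μ) :
    HasSum (fun q : ι × ι ↦ ‖∫ ω, ⟪b q.1, X ω⟫_𝕜 * ⟪X ω, b q.2⟫_𝕜 ∂μ‖ ^ 2)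
      (∫ ω, ‖⟪X ω, Y ω⟫_𝕜‖ ^ 2 ∂μ) := by
  have hmoment (u v : E) :
      ∫ ω, ⟪v, Y ω⟫_𝕜 * ⟪Y ω, u⟫_𝕜 ∂μ = ∫ ω, ⟪v, X ω⟫_𝕜 * ⟪X ω, u⟫_𝕜 ∂μ :=
    have hcont : Continuous fun x : E ↦ ⟪v, x⟫_𝕜 * ⟪x, u⟫_𝕜 := by fun_prop
    (hident.comp hcont.measurable).integral_eq.symm
  have htrace := hasSum_integral_mul_integral_of_indepFun b hXY hX (hident.memLp_snd hX)
  simp only [hmoment, integral_inner_mul_inner_mul_swap_eq_sq_norm] at htrace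
  exact (RCLike.hasSum_ofReal 𝕜).mp htrace

end

/-- **Lemma A.2**: if `X` and `Y` are i.i.d. `H`-valued random elements with zero mean
and finite second moment, then `E⟨X,Y⟩² = Σ_{i,j} (E[⟨X,e_i⟩⟨X,e_j⟩])²`, the squared
Hilbert–Schmidt norm of the covariance operator `E[X ⊗ X]`, for every Hilbert basis
`(e_i)` of `H`. -/
theorem integral_inner_sq_eq_covariance_HS_normSq
    {H : Type*} [NormedAddCommGroup H] [InnerProductSpace ℝ H]
    [CompleteSpace H] [SecondCountableTopology H] [MeasurableSpace H] [BorelSpace H]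
    {Ω : Type*} [MeasurableSpace Ω] (P : Measure Ω) [IsProbabilityMeasure P]
    (X Y : Ω → H) (hX : Measurable X) (hY : Measurable Y)
    (hindep : IndepFun X Y P) (hident : IdentDistrib X Y P P)
    (hXint : Integrable X P) (hmean : (∫ ω, X ω ∂P) = 0)
    (hmom2 : Integrable (fun ω => ‖X ω‖ ^ 2) P)
    (b : HilbertBasis ℕ ℝ H) :
    ∫ ω, ⟪X ω, Y ω⟫ ^ 2 ∂P =
      ∑' q : ℕ × ℕ, (∫ ω, ⟪X ω, b q.1⟫ * ⟪X ω, b q.2⟫ ∂P) ^ 2 := by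
  have hX2 : MemLp X 2 P := (memLp_two_iff_integrable_sq_norm hXint.aestronglyMeasurable).2 hmom2
  simpa [real_inner_comm] using
    (integral_inner_sq_eq_covariance_HS_normSq_general b hindep hident hX2).tsum_eq.symm

end
end

section
/- Suppose (u_t)_{t∈ℤ} is a strong white noise in H. Let t₁, s₁, t₂, s₂, j₁, j₂ be integers with t₁ > s₁, t₂ > s₂, j₁ ≥ 1 and j₂ ≥ 1. Then E[ ⟨u_{t₁},u_{s₁}⟩·⟨u_{s₁−j₁},u_{t₁−j₁}⟩·⟨u_{t₂},u_{s₂}⟩·⟨u_{s₂−j₂},u_{t₂−j₂}⟩ ] = 0 unless both of the following hold: (a) t₁ = t₂, and (b) either (j₁ = j₂ and s₁ = s₂) or (s₁ = t₁ − j₂ and s₂ = t₁ − j₁). -/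
open MeasureTheory ProbabilityTheory Filter Finset Topology
open scoped NNReal RealInnerProductSpace

noncomputable section

/-!
If some index occurs exactly once among the eight arguments of the inner products, the variable at
that index is centered and independent of all the others, so integrating it out first gives zero.
The largest index, `t₁` or `t₂`, occurs once unless `t₁ = t₂`. The smallest one, `s₁ - j₁` or
`s₂ - j₂`, then occurs once unless `s₁ - j₁ = s₂ - j₂`. Given both equalities, `s₁` or `s₂`
occurs once: the only other possible matches are among `s₁`, `s₂`, `t₁ - j₁`, `t₁ - j₂`, and the
relation `s₁ - s₂ = j₁ - j₂` turns any pairing of these four into one of the two excluded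
configurations.
-/

section CenteredIndependent

variable {𝕜 H Ω : Type*} [RCLike 𝕜] [NormedAddCommGroup H] [InnerProductSpace 𝕜 H]
  [MeasurableSpace H] [BorelSpace H] [MeasurableSpace Ω] {P : Measure Ω}

lemma indepFun_of_measurable_iSup_ne {κ β : Type*} {α : κ → Type*}
    [mα : ∀ i, MeasurableSpace (α i)] [MeasurableSpace β] {u : ∀ i, Ω → α i}
    (hmeas : ∀ i, Measurable (u i)) (hindep : iIndepFun u P) {k : κ} {Y : Ω → β}
    (hY : Measurable[⨆ i ≠ k, (mα i).comap (u i)] Y) : IndepFun (u k) Y P := by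
  have hsplit : Indep (⨆ i ∈ ({k} : Set κ), (mα i).comap (u i))
      (⨆ i ∈ ({k}ᶜ : Set κ), (mα i).comap (u i)) P :=
    indep_iSup_of_disjoint (fun i => (hmeas i).comap_le) hindep disjoint_compl_right
  rw [IndepFun_iff_Indep]
  exact indep_of_indep_of_le_right (by simpa using hsplit) hY.comap_le

variable [CompleteSpace H] [NormedSpace ℝ H] [SecondCountableTopology H]

-- If `⟪X, Y⟫` is not integrable, its integral is `0` by convention.
lemma integral_inner_eq_zero_of_indepFun [IsFiniteMeasure P] {X Y : Ω → H}
    (hXY : IndepFun X Y P) (hY : AEMeasurable Y P) (hX : Integrable X P)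
    (hmean : ∫ ω, X ω ∂P = 0) : ∫ ω, inner 𝕜 (X ω) (Y ω) ∂P = 0 := by
  have hinner : StronglyMeasurable fun p : H × H => inner 𝕜 p.1 p.2 :=
    (measurable_fst.inner measurable_snd).stronglyMeasurable
  have hfiber (y : H) : ∫ x, inner 𝕜 x y ∂(P.map X) = 0 := by
    have hconj : ∫ ω, inner 𝕜 y (X ω) ∂P = 0 := by
      rw [integral_inner hX, hmean, inner_zero_right]
    rw [integral_map hX.aemeasurable (by fun_prop)]
    simp_rw [← inner_conj_symm (X _) y]
    rw [integral_conj, hconj, map_zero]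
  rw [← integral_map (f := fun p : H × H => inner 𝕜 p.1 p.2) (hX.aemeasurable.prodMk hY)
    hinner.aestronglyMeasurable, hXY.map_prod_eq_prod_map_map hX.aemeasurable hY]
  by_cases hint : Integrable (fun p : H × H => inner 𝕜 p.1 p.2) ((P.map X).prod (P.map Y))
  · simp [integral_prod_symm _ hint, hfiber]
  · exact integral_undef hint

variable {ι κ : Type*} [Fintype ι] {u : κ → Ω → H}

lemma integral_prod_inner_eq_zero_of_left_ne (hmeas : ∀ i, Measurable (u i))
    (hindep : iIndepFun u P) {a b : ι → κ} {j : ι} (hint : Integrable (u (a j)) P)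
    (hmean : ∫ ω, u (a j) ω ∂P = 0) (ha : ∀ i ≠ j, a i ≠ a j) (hb : ∀ i, b i ≠ a j) :
    ∫ ω, ∏ i, inner 𝕜 (u (a i) ω) (u (b i) ω) ∂P = 0 := by
  classical
  have := hindep.isProbabilityMeasure
  let Y : Ω → H := fun ω =>
    (∏ i ∈ univ.erase j, inner 𝕜 (u (a i) ω) (u (b i) ω)) • u (b j) ω
  have hother {i : κ} (hi : i ≠ a j) :
      Measurable[⨆ i ≠ a j, MeasurableSpace.comap (u i) inferInstance] (u i) :=
    (comap_measurable (u i)).mono (le_iSup₂_of_le i hi le_rfl) le_rfl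
  have hY : Measurable[⨆ i ≠ a j, MeasurableSpace.comap (u i) inferInstance] Y :=
    (Finset.measurable_fun_prod _ fun i hi =>
      (hother (ha i (ne_of_mem_erase hi))).inner (hother (hb i))).smul (hother (hb j))
  have hfactor (ω : Ω) :
      ∏ i, inner 𝕜 (u (a i) ω) (u (b i) ω) = inner 𝕜 (u (a j) ω) (Y ω) := by
    rw [inner_smul_right, prod_erase_mul _ _ (mem_univ j)]
  simp_rw [hfactor]
  exact integral_inner_eq_zero_of_indepFun (indepFun_of_measurable_iSup_ne hmeas hindep hY)
    (hY.mono (iSup₂_le fun i _ => (hmeas i).comap_le) le_rfl).aemeasurable hint hmean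

lemma integral_prod_inner_eq_zero_of_existsUnique (hmeas : ∀ i, Measurable (u i))
    (hindep : iIndepFun u P) {a b : ι → κ} {k : κ} (hint : Integrable (u k) P)
    (hmean : ∫ ω, u k ω ∂P = 0) (hk : ∃! x, Sum.elim a b x = k) :
    ∫ ω, ∏ i, inner 𝕜 (u (a i) ω) (u (b i) ω) ∂P = 0 := by
  obtain ⟨j | j, rfl, huniq⟩ := hk
  · refine integral_prod_inner_eq_zero_of_left_ne hmeas hindep hint hmean
      (fun i hij hi => hij ?_) (fun i hi => ?_)
    · exact Sum.inl_injective (huniq (.inl i) hi)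
    · exact Sum.inr_ne_inl (huniq (.inr i) hi)
  · have hswap : ∫ ω, ∏ i, inner 𝕜 (u (b i) ω) (u (a i) ω) ∂P = 0 := by
      refine integral_prod_inner_eq_zero_of_left_ne hmeas hindep hint hmean
        (fun i hij hi => hij ?_) (fun i hi => ?_)
      · exact Sum.inr_injective (huniq (.inr i) hi)
      · exact Sum.inl_ne_inr (huniq (.inl i) hi)
    simp_rw [← inner_conj_symm (u (a _) _), ← map_prod]
    rw [integral_conj, hswap, map_zero]

end CenteredIndependent

lemma exists_index_occurring_once {G : Type*} [AddCommGroup G] [LinearOrder G]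
    [IsOrderedAddMonoid G] {t₁ s₁ t₂ s₂ j₁ j₂ : G}
    (h₁ : s₁ < t₁) (h₂ : s₂ < t₂) (hj₁ : 0 < j₁) (hj₂ : 0 < j₂)
    (hcond : ¬ (t₁ = t₂ ∧ ((j₁ = j₂ ∧ s₁ = s₂) ∨ (s₁ = t₁ - j₂ ∧ s₂ = t₁ - j₁)))) :
    ∃ k, ∃! x, Sum.elim ![t₁, s₁ - j₁, t₂, s₂ - j₂] ![s₁, t₁ - j₁, s₂, t₂ - j₂] x = k := by
  rcases lt_trichotomy t₁ t₂ with ht | rfl | ht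
  · refine ⟨t₂, .inl 2, rfl, ?_⟩
    rintro (i | i) <;> fin_cases i <;> dsimp <;> grind
  · rcases lt_trichotomy (s₁ - j₁) (s₂ - j₂) with hs | hs | hs
    · refine ⟨s₁ - j₁, .inl 1, rfl, ?_⟩
      rintro (i | i) <;> fin_cases i <;> dsimp <;> grind
    · by_cases hsj : s₁ = t₁ - j₁
      · refine ⟨s₂, .inr 2, rfl, ?_⟩
        rintro (i | i) <;> fin_cases i <;> dsimp <;> grind
      · refine ⟨s₁, .inr 0, rfl, ?_⟩
        rintro (i | i) <;> fin_cases i <;> dsimp <;> grind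
    · refine ⟨s₂ - j₂, .inl 3, rfl, ?_⟩
      rintro (i | i) <;> fin_cases i <;> dsimp <;> grind
  · refine ⟨t₁, .inl 0, rfl, ?_⟩
    rintro (i | i) <;> fin_cases i <;> dsimp <;> grind

theorem integral_w_mul_w_eq_zero_general {𝕜 H Ω G : Type*} [RCLike 𝕜]
    [NormedAddCommGroup H] [InnerProductSpace 𝕜 H] [NormedSpace ℝ H] [CompleteSpace H]
    [SecondCountableTopology H] [MeasurableSpace H] [BorelSpace H]
    [MeasurableSpace Ω] {P : Measure Ω} [AddCommGroup G] [LinearOrder G] [IsOrderedAddMonoid G]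
    {u : G → Ω → H} (hmeas : ∀ t, Measurable (u t)) (hindep : iIndepFun u P)
    (hint : ∀ t, Integrable (u t) P) (hmean : ∀ t, ∫ ω, u t ω ∂P = 0)
    {t₁ s₁ t₂ s₂ j₁ j₂ : G} (h₁ : s₁ < t₁) (h₂ : s₂ < t₂) (hj₁ : 0 < j₁) (hj₂ : 0 < j₂)
    (hcond : ¬ (t₁ = t₂ ∧ ((j₁ = j₂ ∧ s₁ = s₂) ∨ (s₁ = t₁ - j₂ ∧ s₂ = t₁ - j₁)))) :
    ∫ ω, inner 𝕜 (u t₁ ω) (u s₁ ω) * inner 𝕜 (u (s₁ - j₁) ω) (u (t₁ - j₁) ω) *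
        inner 𝕜 (u t₂ ω) (u s₂ ω) * inner 𝕜 (u (s₂ - j₂) ω) (u (t₂ - j₂) ω) ∂P = 0 := by
  obtain ⟨k, hk⟩ := exists_index_occurring_once h₁ h₂ hj₁ hj₂ hcond
  simpa [Fin.prod_univ_four] using
    integral_prod_inner_eq_zero_of_existsUnique (𝕜 := 𝕜) hmeas hindep (hint k) (hmean k) hk

/-- **Lemma A.6**: for a strong white noise, with `t₁ > s₁`, `t₂ > s₂`, `j₁, j₂ ≥ 1`,
`E[⟨u_{t₁},u_{s₁}⟩⟨u_{s₁-j₁},u_{t₁-j₁}⟩⟨u_{t₂},u_{s₂}⟩⟨u_{s₂-j₂},u_{t₂-j₂}⟩] = 0`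
unless `t₁ = t₂` and (`j₁ = j₂` and `s₁ = s₂`, or `s₁ = t₁ - j₂` and `s₂ = t₁ - j₁`). -/
theorem integral_w_mul_w_eq_zero
    {H : Type*} [NormedAddCommGroup H] [InnerProductSpace ℝ H]
    [CompleteSpace H] [SecondCountableTopology H] [MeasurableSpace H] [BorelSpace H]
    {Ω : Type*} [MeasurableSpace Ω] (P : Measure Ω) [IsProbabilityMeasure P]
    (u : ℤ → Ω → H)
    (hmeas : ∀ t, Measurable (u t))
    (hindep : iIndepFun u P)
    (hident : ∀ t, IdentDistrib (u t) (u 0) P P)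
    (hint : Integrable (u 0) P)
    (hmean : ∫ ω, u 0 ω ∂P = 0)
    (hmom4 : Integrable (fun ω => ‖u 0 ω‖ ^ 4) P)
    (t₁ s₁ t₂ s₂ j₁ j₂ : ℤ) (h₁ : s₁ < t₁) (h₂ : s₂ < t₂) (hj₁ : 1 ≤ j₁) (hj₂ : 1 ≤ j₂)
    (hcond : ¬ (t₁ = t₂ ∧ ((j₁ = j₂ ∧ s₁ = s₂) ∨ (s₁ = t₁ - j₂ ∧ s₂ = t₁ - j₁)))) :
    ∫ ω, ⟪u t₁ ω, u s₁ ω⟫ * ⟪u (s₁ - j₁) ω, u (t₁ - j₁) ω⟫ *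
        ⟪u t₂ ω, u s₂ ω⟫ * ⟪u (s₂ - j₂) ω, u (t₂ - j₂) ω⟫ ∂P = 0 := by
  exact integral_w_mul_w_eq_zero_general hmeas hindep (fun t => (hident t).integrable_iff.2 hint)
    (fun t => (hident t).integral_eq.trans hmean) h₁ h₂ (by lia) (by lia) hcond

end
end

section
/- Suppose X and Y are independent and identically distributed H-valued random elements with Bochner mean E X = 0 and E‖X‖⁴ < ∞. Fix a Hilbert (orthonormal) basis (e_i)_{i∈ℕ} of H and write X_i = ⟨X,e_i⟩ and Y_j = ⟨Y,e_j⟩. Then the following three identities hold: (I) Σ_{i,j∈ℕ} E[X_i²·Y_j²] = (E‖X‖²)²; (II) Σ_{i,j,k,l∈ℕ} ( E[X_i·Y_j·X_k·Y_l] )² = ( Σ_{i,k∈ℕ} (E[X_i·X_k])² )²; (III) Σ_{i,j,k,l,m,p∈ℕ} E[X_i·Y_j·X_k·Y_l]·E[X_k·Y_l·X_m·Y_p]·E[X_m·Y_p·X_i·Y_j] = ( Σ_{i,k,m∈ℕ} E[X_i·X_k]·E[X_k·X_m]·E[X_m·X_i] )². (These are, respectively, the identities Tr 𝒜 = (Tr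 C(0))², Tr 𝒜² = (Tr C(0)²)², Tr 𝒜³ = (Tr C(0)³)² for the operator 𝒜 = E[X⊗Y ⊗̃ X⊗Y] on the Hilbert–Schmidt class and the covariance operator C(0) = E[X⊗X].) -/
open MeasureTheory ProbabilityTheory Filter Finset Topology
open scoped NNReal RealInnerProductSpace

noncomputable section

/-!
Independence factors the matrix of `𝒜` in the product basis as
`E[X_i Y_j X_k Y_l] = E[X_i X_k] E[Y_j Y_l]`, so `𝒜` is the Kronecker product of the covariance
operators of `X` and `Y`, and the trace of each power of `𝒜` is the product of the two traces.
Absolute convergence comes from Cauchy–Schwarz, `E[X_i X_k]² ≤ E[X_i²] E[X_k²]`, together with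
Parseval's identity `∑ᵢ E[X_i²] = E‖X‖²`.
-/

section Summation

variable {ι κ τ : Type*}

lemma summable_sq_of_sq_le_mul {u : ι → ℝ} {v : κ → ℝ} {A : ι → κ → ℝ}
    (hu : Summable u) (hv : Summable v) (hu₀ : 0 ≤ u) (hv₀ : 0 ≤ v)
    (hA : ∀ i k, A i k ^ 2 ≤ u i * v k) :
    Summable fun q : ι × κ => A q.1 q.2 ^ 2 :=
  (hu.mul_of_nonneg hv hu₀ hv₀).of_nonneg_of_le (fun _ => sq_nonneg _) fun q => hA q.1 q.2

lemma summable_cyclic_mul_of_sq_le_mul {u : ι → ℝ} {v : κ → ℝ} {w : τ → ℝ}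
    {A : ι → κ → ℝ} {B : κ → τ → ℝ} {C : τ → ι → ℝ}
    (hu : Summable u) (hv : Summable v) (hw : Summable w)
    (hu₀ : 0 ≤ u) (hv₀ : 0 ≤ v) (hw₀ : 0 ≤ w)
    (hA : ∀ i k, A i k ^ 2 ≤ u i * v k) (hB : ∀ k m, B k m ^ 2 ≤ v k * w m)
    (hC : ∀ m i, C m i ^ 2 ≤ w m * u i) :
    Summable fun q : ι × κ × τ => A q.1 q.2.1 * B q.2.1 q.2.2 * C q.2.2 q.1 := by
  have hvw₀ : 0 ≤ fun q : κ × τ => v q.1 * w q.2 := fun q => mul_nonneg (hv₀ q.1) (hw₀ q.2)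
  refine (hu.mul_of_nonneg (hv.mul_of_nonneg hw hv₀ hw₀) hu₀ hvw₀).of_norm_bounded ?_
  rintro ⟨i, k, m⟩
  have hui := hu₀ i
  have hvk := hv₀ k
  have hwm := hw₀ m
  simp only [Pi.zero_apply] at hui hvk hwm
  refine abs_le_of_sq_le_sq ?_ (by positivity)
  calc (A i k * B k m * C m i) ^ 2 = A i k ^ 2 * B k m ^ 2 * C m i ^ 2 := by ring
    _ ≤ (u i * v k) * (v k * w m) * (w m * u i) := by
      gcongr
      exacts [hA i k, hB k m, hC m i]
    _ = (u i * (v k * w m)) ^ 2 := by ring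

lemma hasSum_mul_tsum {f : ι → ℝ} {g : κ → ℝ} (hf : Summable f) (hg : Summable g) :
    HasSum (fun q : ι × κ => f q.1 * g q.2) ((∑' i, f i) * ∑' j, g j) :=
  hf.hasSum.mul hg.hasSum (summable_mul_of_summable_norm hf.norm hg.norm)

/-- The equivalence `(i, j, k, l) ↦ ((i, k), (j, l))`, which separates the indices of the two
factors of a Kronecker product in the entries of its square. -/
@[simps]
def unshuffleTwo (ι κ : Type*) : ι × κ × ι × κ ≃ (ι × ι) × (κ × κ) where
  toFun q := ((q.1, q.2.2.1), (q.2.1, q.2.2.2))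
  invFun r := (r.1.1, r.2.1, r.1.2, r.2.2)

/-- The equivalence `(i, j, k, l, m, p) ↦ ((i, k, m), (j, l, p))`, which separates the indices of
the two factors of a Kronecker product in the entries of its cube. -/
@[simps]
def unshuffleThree (ι κ : Type*) :
    ι × κ × ι × κ × ι × κ ≃ (ι × ι × ι) × (κ × κ × κ) where
  toFun q := ((q.1, q.2.2.1, q.2.2.2.2.1), (q.2.1, q.2.2.2.1, q.2.2.2.2.2))
  invFun r := (r.1.1, r.2.1, r.1.2.1, r.2.2.1, r.1.2.2, r.2.2.2)

end Summation

section Parseval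

variable {ι 𝕜 E Ω : Type*} [RCLike 𝕜] [NormedAddCommGroup E] [InnerProductSpace 𝕜 E]

lemma hasSum_sq_norm_inner (b : HilbertBasis ι 𝕜 E) (x : E) :
    HasSum (fun i => ‖inner 𝕜 x (b i)‖ ^ 2) (‖x‖ ^ 2) := by
  have h := lp.hasSum_norm (p := 2) (by norm_num) (b.repr x)
  simpa [b.repr_apply_apply, norm_inner_symm] using h

lemma hasSum_integral_sq_norm_inner [Countable ι] [MeasurableSpace Ω] {P : Measure Ω} {X : Ω → E}
    (hX : MemLp X 2 P) (b : HilbertBasis ι 𝕜 E) :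
    HasSum (fun i => ∫ ω, ‖inner 𝕜 (X ω) (b i)‖ ^ 2 ∂P) (∫ ω, ‖X ω‖ ^ 2 ∂P) := by
  refine hasSum_integral_of_dominated_convergence (fun i ω => ‖inner 𝕜 (X ω) (b i)‖ ^ 2)
    (fun i => hX.1.inner_const.norm.pow 2) (fun i => ae_of_all _ fun ω => by simp)
    (ae_of_all _ fun ω => (hasSum_sq_norm_inner b (X ω)).summable) ?_
    (ae_of_all _ fun ω => hasSum_sq_norm_inner b (X ω))
  simpa only [(hasSum_sq_norm_inner b (X _)).tsum_eq] using hX.integrable_norm_pow two_ne_zero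

end Parseval

lemma sq_integral_mul_le {Ω : Type*} [MeasurableSpace Ω] {P : Measure Ω} {f g : Ω → ℝ}
    (hf : MemLp f 2 P) (hg : MemLp g 2 P) :
    (∫ ω, f ω * g ω ∂P) ^ 2 ≤ (∫ ω, f ω * f ω ∂P) * ∫ ω, g ω * g ω ∂P := by
  have inner_toLp {f g : Ω → ℝ} (hf : MemLp f 2 P) (hg : MemLp g 2 P) :
      ⟪hf.toLp f, hg.toLp g⟫ = ∫ ω, f ω * g ω ∂P := by
    rw [L2.inner_def]
    refine integral_congr_ae ?_
    filter_upwards [hf.coeFn_toLp, hg.coeFn_toLp] with ω hfω hgω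
    rw [hfω, hgω, RCLike.inner_apply, conj_trivial, mul_comm]
  simpa only [inner_toLp, sq] using real_inner_mul_inner_self_le (hf.toLp f) (hg.toLp g)

section SecondMoment

variable {H K Ω ι κ : Type*} [NormedAddCommGroup H] [InnerProductSpace ℝ H]
  [NormedAddCommGroup K] [InnerProductSpace ℝ K] [MeasurableSpace Ω] {P : Measure Ω}
  {X : Ω → H} {Y : Ω → K}

/-- The bilinear form `⟪E[X ⊗ X] x, y⟫ = E[⟪X, x⟫ ⟪X, y⟫]` of the second-moment operator of `X`,
which is its covariance operator when `X` is centred. For square-integrable `X` it agrees with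
`⟪covarianceOperator (P.map X) x, y⟫`; integrating over `Ω` avoids passing to the law, and needs no
completeness. -/
def secondMoment (P : Measure Ω) (X : Ω → H) (x y : H) : ℝ :=
  ∫ ω, ⟪X ω, x⟫ * ⟪X ω, y⟫ ∂P

lemma secondMoment_self_nonneg (P : Measure Ω) (X : Ω → H) (x : H) : 0 ≤ secondMoment P X x x :=
  integral_nonneg fun _ => mul_self_nonneg _

lemma secondMoment_sq_le (hX : MemLp X 2 P) (x y : H) :
    secondMoment P X x y ^ 2 ≤ secondMoment P X x x * secondMoment P X y y :=
  sq_integral_mul_le (hX.inner_const x) (hX.inner_const y)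

lemma secondMoment_eq_of_identDistrib [MeasurableSpace H] [OpensMeasurableSpace H]
    {Ω' : Type*} [MeasurableSpace Ω'] {P' : Measure Ω'} {X' : Ω' → H}
    (h : IdentDistrib X X' P P') : secondMoment P X = secondMoment P' X' := by
  ext x y
  have hm : Measurable fun z : H => ⟪z, x⟫ * ⟪z, y⟫ := by fun_prop
  exact (h.comp hm).integral_eq

lemma integral_inner_mul_eq_secondMoment_mul [MeasurableSpace H] [OpensMeasurableSpace H]
    [MeasurableSpace K] [OpensMeasurableSpace K] (hX : AEMeasurable X P) (hY : AEMeasurable Y P)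
    (hXY : IndepFun X Y P) (x x' : H) (y y' : K) :
    ∫ ω, ⟪X ω, x⟫ * ⟪Y ω, y⟫ * ⟪X ω, x'⟫ * ⟪Y ω, y'⟫ ∂P =
      secondMoment P X x x' * secondMoment P Y y y' := by
  have hx : Measurable fun z : H => ⟪z, x⟫ * ⟪z, x'⟫ := by fun_prop
  have hy : Measurable fun z : K => ⟪z, y⟫ * ⟪z, y'⟫ := by fun_prop
  calc ∫ ω, ⟪X ω, x⟫ * ⟪Y ω, y⟫ * ⟪X ω, x'⟫ * ⟪Y ω, y'⟫ ∂P
      = ∫ ω, (⟪X ω, x⟫ * ⟪X ω, x'⟫) * (⟪Y ω, y⟫ * ⟪Y ω, y'⟫) ∂P := by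
        congr with ω
        ring
    _ = secondMoment P X x x' * secondMoment P Y y y' :=
        (hXY.comp hx hy).integral_fun_mul_eq_mul_integral
          (hx.comp_aemeasurable hX).aestronglyMeasurable
          (hy.comp_aemeasurable hY).aestronglyMeasurable

variable [Countable ι] [Countable κ]

lemma hasSum_secondMoment_self (hX : MemLp X 2 P) (b : HilbertBasis ι ℝ H) :
    HasSum (fun i => secondMoment P X (b i) (b i)) (∫ ω, ‖X ω‖ ^ 2 ∂P) := by
  simpa only [secondMoment, Real.norm_eq_abs, sq_abs, ← sq] using hasSum_integral_sq_norm_inner hX b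

lemma summable_secondMoment_sq (hX : MemLp X 2 P) (b : HilbertBasis ι ℝ H) :
    Summable fun q : ι × ι => secondMoment P X (b q.1) (b q.2) ^ 2 :=
  have hs := (hasSum_secondMoment_self hX b).summable
  have h₀ := fun i => secondMoment_self_nonneg P X (b i)
  summable_sq_of_sq_le_mul (A := fun i k => secondMoment P X (b i) (b k)) hs hs h₀ h₀
    fun i k => secondMoment_sq_le hX (b i) (b k)

lemma summable_secondMoment_cyclic_mul (hX : MemLp X 2 P) (b : HilbertBasis ι ℝ H) :
    Summable fun q : ι × ι × ι => secondMoment P X (b q.1) (b q.2.1) *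
      secondMoment P X (b q.2.1) (b q.2.2) * secondMoment P X (b q.2.2) (b q.1) :=
  have hs := (hasSum_secondMoment_self hX b).summable
  have h₀ := fun i => secondMoment_self_nonneg P X (b i)
  let C := fun i k => secondMoment P X (b i) (b k)
  have hC := fun i k => secondMoment_sq_le hX (b i) (b k)
  summable_cyclic_mul_of_sq_le_mul (A := C) (B := C) (C := C) hs hs hs h₀ h₀ h₀ hC hC hC

theorem trace_identities_for_tensor_covariance_general
    [MeasurableSpace H] [BorelSpace H] [MeasurableSpace K] [BorelSpace K]
    (hX : MemLp X 2 P) (hY : MemLp Y 2 P) (hXY : IndepFun X Y P)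
    (b : HilbertBasis ι ℝ H) (c : HilbertBasis κ ℝ K) :
    HasSum (fun q : ι × κ => ∫ ω, ⟪X ω, b q.1⟫ ^ 2 * ⟪Y ω, c q.2⟫ ^ 2 ∂P)
      ((∫ ω, ‖X ω‖ ^ 2 ∂P) * ∫ ω, ‖Y ω‖ ^ 2 ∂P) ∧
    HasSum (fun q : ι × κ × ι × κ =>
        (∫ ω, ⟪X ω, b q.1⟫ * ⟪Y ω, c q.2.1⟫ * ⟪X ω, b q.2.2.1⟫ * ⟪Y ω, c q.2.2.2⟫ ∂P) ^ 2)
      ((∑' q : ι × ι, secondMoment P X (b q.1) (b q.2) ^ 2) *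
        ∑' q : κ × κ, secondMoment P Y (c q.1) (c q.2) ^ 2) ∧
    HasSum (fun q : ι × κ × ι × κ × ι × κ =>
        (∫ ω, ⟪X ω, b q.1⟫ * ⟪Y ω, c q.2.1⟫ * ⟪X ω, b q.2.2.1⟫ * ⟪Y ω, c q.2.2.2.1⟫ ∂P) *
        (∫ ω, ⟪X ω, b q.2.2.1⟫ * ⟪Y ω, c q.2.2.2.1⟫ * ⟪X ω, b q.2.2.2.2.1⟫ *
          ⟪Y ω, c q.2.2.2.2.2⟫ ∂P) *
        (∫ ω, ⟪X ω, b q.2.2.2.2.1⟫ * ⟪Y ω, c q.2.2.2.2.2⟫ * ⟪X ω, b q.1⟫ *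
          ⟪Y ω, c q.2.1⟫ ∂P))
      ((∑' q : ι × ι × ι, secondMoment P X (b q.1) (b q.2.1) *
          secondMoment P X (b q.2.1) (b q.2.2) * secondMoment P X (b q.2.2) (b q.1)) *
        ∑' q : κ × κ × κ, secondMoment P Y (c q.1) (c q.2.1) *
          secondMoment P Y (c q.2.1) (c q.2.2) * secondMoment P Y (c q.2.2) (c q.1)) := by
  have factor := integral_inner_mul_eq_secondMoment_mul hX.1.aemeasurable hY.1.aemeasurable hXY
  refine ⟨?_, ?_, ?_⟩
  · have hXs := hasSum_secondMoment_self hX b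
    have hYs := hasSum_secondMoment_self hY c
    rw [← hXs.tsum_eq, ← hYs.tsum_eq]
    convert hasSum_mul_tsum hXs.summable hYs.summable using 2 with q
    rw [← factor]
    congr with ω
    ring
  · simp only [factor]
    convert (unshuffleTwo ι κ).hasSum_iff.mpr
      (hasSum_mul_tsum (summable_secondMoment_sq hX b) (summable_secondMoment_sq hY c)) using 2
    simp [mul_pow]
  · simp only [factor]
    convert (unshuffleThree ι κ).hasSum_iff.mpr (hasSum_mul_tsum
      (summable_secondMoment_cyclic_mul hX b) (summable_secondMoment_cyclic_mul hY c)) using 2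
    simp only [Function.comp_apply, unshuffleThree_apply]
    ring

end SecondMoment

/-- **Lemma B.1**: for i.i.d. `X, Y` with zero mean and finite fourth moment, and a
Hilbert basis `(e_i)` of `H`, writing `X_i = ⟨X,e_i⟩`, `Y_j = ⟨Y,e_j⟩`:
(I) `Σ_{i,j} E[X_i² Y_j²] = (E‖X‖²)²`,
(II) `Σ_{i,j,k,l} (E[X_i Y_j X_k Y_l])² = (Σ_{i,k} (E[X_i X_k])²)²`,
(III) `Σ_{i,j,k,l,m,p} E[X_i Y_j X_k Y_l] E[X_k Y_l X_m Y_p] E[X_m Y_p X_i Y_j]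
        = (Σ_{i,k,m} E[X_i X_k] E[X_k X_m] E[X_m X_i])²`.
These are `Tr 𝒜 = (Tr C(0))²`, `Tr 𝒜² = (Tr C(0)²)²`, `Tr 𝒜³ = (Tr C(0)³)²`. -/
theorem trace_identities_for_tensor_covariance
    {H : Type*} [NormedAddCommGroup H] [InnerProductSpace ℝ H]
    [CompleteSpace H] [SecondCountableTopology H] [MeasurableSpace H] [BorelSpace H]
    {Ω : Type*} [MeasurableSpace Ω] (P : Measure Ω) [IsProbabilityMeasure P]
    (X Y : Ω → H) (hX : Measurable X) (hY : Measurable Y)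
    (hindep : IndepFun X Y P) (hident : IdentDistrib X Y P P)
    (hXint : Integrable X P) (hmean : (∫ ω, X ω ∂P) = 0)
    (hmom4 : Integrable (fun ω => ‖X ω‖ ^ 4) P)
    (b : HilbertBasis ℕ ℝ H) :
    (∑' q : ℕ × ℕ, ∫ ω, ⟪X ω, b q.1⟫ ^ 2 * ⟪Y ω, b q.2⟫ ^ 2 ∂P
        = (∫ ω, ‖X ω‖ ^ 2 ∂P) ^ 2) ∧
    (∑' q : ℕ × ℕ × ℕ × ℕ,
        (∫ ω, ⟪X ω, b q.1⟫ * ⟪Y ω, b q.2.1⟫ * ⟪X ω, b q.2.2.1⟫ * ⟪Y ω, b q.2.2.2⟫ ∂P) ^ 2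
        = (∑' q : ℕ × ℕ, (∫ ω, ⟪X ω, b q.1⟫ * ⟪X ω, b q.2⟫ ∂P) ^ 2) ^ 2) ∧
    (∑' q : ℕ × ℕ × ℕ × ℕ × ℕ × ℕ,
        (∫ ω, ⟪X ω, b q.1⟫ * ⟪Y ω, b q.2.1⟫ * ⟪X ω, b q.2.2.1⟫ * ⟪Y ω, b q.2.2.2.1⟫ ∂P) *
        (∫ ω, ⟪X ω, b q.2.2.1⟫ * ⟪Y ω, b q.2.2.2.1⟫ * ⟪X ω, b q.2.2.2.2.1⟫ *
            ⟪Y ω, b q.2.2.2.2.2⟫ ∂P) *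
        (∫ ω, ⟪X ω, b q.2.2.2.2.1⟫ * ⟪Y ω, b q.2.2.2.2.2⟫ * ⟪X ω, b q.1⟫ *
            ⟪Y ω, b q.2.1⟫ ∂P)
        = (∑' q : ℕ × ℕ × ℕ,
            (∫ ω, ⟪X ω, b q.1⟫ * ⟪X ω, b q.2.1⟫ ∂P) *
            (∫ ω, ⟪X ω, b q.2.1⟫ * ⟪X ω, b q.2.2⟫ ∂P) *
            (∫ ω, ⟪X ω, b q.2.2⟫ * ⟪X ω, b q.1⟫ ∂P)) ^ 2) := by
  have hX2 : MemLp X 2 P := (memLp_two_iff_integrable_sq_norm hX.aestronglyMeasurable).mpr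
    (integrable_norm_pow_of_le hX.aestronglyMeasurable (by norm_num) hmom4)
  obtain ⟨hI, hII, hIII⟩ :=
    trace_identities_for_tensor_covariance_general hX2 (hident.memLp_snd hX2) hindep b b
  rw [← hident.norm.sq.integral_eq, ← sq] at hI
  rw [← secondMoment_eq_of_identDistrib hident, ← sq] at hII hIII
  exact ⟨hI.tsum_eq, hII.tsum_eq, hIII.tsum_eq⟩

end
end

section
/- Suppose (u_t)_{t∈ℤ} is a strong white noise in H and set σ² = E‖u₀‖². Then for every n ≥ 1 and every integer 1 ≤ j ≤ n−1, E[ n^{-2}·Σ_{t=j+1}^n Σ_{s=j+1}^n ⟨u_t,u_s⟩·⟨u_{t−j},u_{s−j}⟩ ] = (1 − j/n)·σ⁴/n. Consequently, for any kernel values k(j/p_n), E[Q̂_n²] = 2·σ⁴·n^{-1}·C_n(k), where Q̂_n² = 2·Σ_{j=1}^{n−1} k(j/p_n)²·n^{-2}·Σ_{t=j+1}^n Σ_{s=j+1}^n ⟨u_t,u_s⟩·⟨u_{t−j},u_{s−j}⟩ and C_n(k) = Σ_{j=1}^{n−1} (1−j/n)·k(j/p_n)². -/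
open MeasureTheory ProbabilityTheory Filter Finset Topology
open scoped NNReal RealInnerProductSpace

noncomputable section

variable {H : Type*} [NormedAddCommGroup H] [InnerProductSpace ℝ H]
variable {Ω : Type*} [MeasurableSpace Ω]

/-- Squared Hilbert–Schmidt norm of the sample autocovariance operator `Ĉ_n(j)`,
written out in terms of inner products:
`‖Ĉ_n(j)‖₂² = n⁻² Σ_{t=j+1}^n Σ_{s=j+1}^n ⟨u_t,u_s⟩⟨u_{t-j},u_{s-j}⟩`. -/
def hatCSq (u : ℤ → Ω → H) (n : ℕ) (j : ℤ) (ω : Ω) : ℝ :=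
  ((n : ℝ) ^ 2)⁻¹ * ∑ t ∈ Finset.Icc (j + 1) (n : ℤ), ∑ s ∈ Finset.Icc (j + 1) (n : ℤ),
    ⟪u t ω, u s ω⟫ * ⟪u (t - j) ω, u (s - j) ω⟫

/-- `σ̂_n² = n⁻¹ Σ_{t=1}^n ‖u_t‖²`. -/
def hatSigmaSq (u : ℤ → Ω → H) (n : ℕ) (ω : Ω) : ℝ :=
  (n : ℝ)⁻¹ * ∑ t ∈ Finset.Icc (1 : ℤ) (n : ℤ), ‖u t ω‖ ^ 2

/-- `Q̂_n² = 2 Σ_{j=1}^{n-1} k(j/p_n)² ‖Ĉ_n(j)‖₂²`. -/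
def hatQSq (u : ℤ → Ω → H) (k : ℝ → ℝ) (p : ℝ) (n : ℕ) (ω : Ω) : ℝ :=
  2 * ∑ j ∈ Finset.Icc 1 (n - 1), k ((j : ℝ) / p) ^ 2 * hatCSq u n (j : ℤ) ω

/-- `C_n(k) = Σ_{j=1}^{n-1} (1 - j/n) k(j/p_n)²`. -/
def Cn (k : ℝ → ℝ) (p : ℝ) (n : ℕ) : ℝ :=
  ∑ j ∈ Finset.Icc 1 (n - 1), (1 - (j : ℝ) / n) * k ((j : ℝ) / p) ^ 2

/-- `D_n(k) = Σ_{j=1}^{n-2} (1 - j/n)(1 - (j+1)/n) k(j/p_n)⁴`. -/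
def Dn (k : ℝ → ℝ) (p : ℝ) (n : ℕ) : ℝ :=
  ∑ j ∈ Finset.Icc 1 (n - 2),
    (1 - (j : ℝ) / n) * (1 - ((j : ℝ) + 1) / n) * k ((j : ℝ) / p) ^ 4

/-- The test statistic `T_n`. -/
def Tstat (u : ℤ → Ω → H) (k : ℝ → ℝ) (p : ℕ → ℝ) (n : ℕ) (ω : Ω) : ℝ :=
  ((n : ℝ) * hatQSq u k (p n) n ω / 2 - hatSigmaSq u n ω ^ 2 * Cn k (p n) n) /
    (hatCSq u n 0 ω * Real.sqrt (2 * Dn k (p n) n))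

/-- A kernel: symmetric, `k(0)=1`, values in `[-1,1]`, continuous at `0` and at all but
finitely many points, with `|k(x)| ≤ c x^{-α}`, `α > 1/2`, for large `x`. -/
def IsKernel (k : ℝ → ℝ) : Prop :=
  (∀ x, k x ∈ Set.Icc (-1 : ℝ) 1) ∧ (∀ x, k (-x) = k x) ∧ k 0 = 1 ∧
    ContinuousAt k 0 ∧ {x : ℝ | ¬ ContinuousAt k x}.Finite ∧
    ∃ α > (1 / 2 : ℝ), ∃ c > (0 : ℝ), ∃ x₀ > (0 : ℝ), ∀ x ≥ x₀, |k x| ≤ c * x ^ (-α)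

/-- A bandwidth: positive reals with `p_n → ∞` and `p_n/n → 0`. -/
def IsBandwidth (p : ℕ → ℝ) : Prop :=
  (∀ n, 0 < p n) ∧ Tendsto p atTop atTop ∧
    Tendsto (fun n => p n / (n : ℝ)) atTop (𝓝 0)

/-!
Expand the double sum defining `‖Ĉ_n(j)‖₂²`. If `t ≠ s` and `j ≠ 0`, then `t` or `s` differs from
all the other times among `t, s, t - j, s - j`, so the corresponding centred factor is independent
of the rest and the term has mean zero. The `n - j` diagonal terms `‖u_t‖² ‖u_{t-j}‖²` are products
of independent variables, and each contributes `σ⁴`. The off-diagonal terms are integrable because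
the inner product of two independent square-integrable variables is again square integrable.
-/

section Independence

variable {E F : Type*} [NormedAddCommGroup E] [MeasurableSpace E] [OpensMeasurableSpace E]
  [NormedAddCommGroup F] [MeasurableSpace F] [OpensMeasurableSpace F]
  {P : Measure Ω} {X : Ω → E} {Y : Ω → F}

lemma memLp_norm_mul_norm_of_indepFun {p : ENNReal} (hXY : IndepFun X Y P)
    (hX : MemLp X p P) (hY : MemLp Y p P) : MemLp (fun ω => ‖X ω‖ * ‖Y ω‖) p P := by
  have hmeas : AEStronglyMeasurable (fun ω => ‖X ω‖ * ‖Y ω‖) P := hX.1.norm.mul hY.1.norm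
  rcases eq_or_ne p 0 with rfl | hp
  · exact memLp_zero_iff_aestronglyMeasurable.2 hmeas
  rcases eq_or_ne p ⊤ with rfl | hp'
  · exact hY.norm.mul hX.norm
  have hindep : IndepFun (fun ω => ‖X ω‖ ^ p.toReal) (fun ω => ‖Y ω‖ ^ p.toReal) P :=
    hXY.comp (measurable_norm.pow_const _) (measurable_norm.pow_const _)
  rw [← integrable_norm_rpow_iff hmeas hp hp']
  simpa only [norm_mul, norm_norm, Real.mul_rpow (norm_nonneg _) (norm_nonneg _)] using!
    hindep.integrable_mul (hX.integrable_norm_rpow hp hp') (hY.integrable_norm_rpow hp hp')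

lemma memLp_bilin_of_indepFun {𝕜 G : Type*} [NontriviallyNormedField 𝕜] [NormedSpace 𝕜 E]
    [NormedSpace 𝕜 F] [NormedAddCommGroup G] [NormedSpace 𝕜 G] {p : ENNReal}
    (hXY : IndepFun X Y P) (hX : MemLp X p P) (hY : MemLp Y p P) (B : E →L[𝕜] F →L[𝕜] G) :
    MemLp (fun ω => B (X ω) (Y ω)) p P := by
  refine (memLp_norm_mul_norm_of_indepFun hXY hX hY).of_le_mul (c := ‖B‖)
    (B.aestronglyMeasurable_comp₂ hX.1 hY.1) (ae_of_all _ fun ω => ?_)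
  simpa only [norm_mul, norm_norm, mul_assoc] using B.le_opNorm₂ (X ω) (Y ω)

lemma integral_norm_pow_mul_norm_pow_of_indepFun (hXY : IndepFun X Y P)
    (hX : AEMeasurable X P) (hY : AEMeasurable Y P) (p q : ℕ) :
    ∫ ω, ‖X ω‖ ^ p * ‖Y ω‖ ^ q ∂P = (∫ ω, ‖X ω‖ ^ p ∂P) * ∫ ω, ‖Y ω‖ ^ q ∂P :=
  hXY.integral_fun_comp_mul_comp hX hY (measurable_norm.pow_const p).aestronglyMeasurable
    (measurable_norm.pow_const q).aestronglyMeasurable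

lemma indepFun_prodMk_three {ι : Type*} {β : ι → Type*} [∀ i, MeasurableSpace (β i)]
    {f : ∀ i, Ω → β i} (hindep : iIndepFun f P)
    (hmeas : ∀ i, AEMeasurable (f i) P) {a b c d : ι} (hab : a ≠ b) (hac : a ≠ c) (had : a ≠ d) :
    IndepFun (f a) (fun ω => (f b ω, f c ω, f d ω)) P := by
  classical
  have hdisj : Disjoint ({a} : Finset ι) {b, c, d} := by simp [hab, hac, had]
  have hproj : Measurable fun x : ∀ i : ({b, c, d} : Finset ι), β i =>
      (x ⟨b, by simp⟩, x ⟨c, by simp⟩, x ⟨d, by simp⟩) := by fun_prop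
  exact (hindep.indepFun_finset₀ {a} {b, c, d} hdisj hmeas).comp
    (measurable_pi_apply ⟨a, mem_singleton_self a⟩) hproj

end Independence

section InnerProducts

variable [MeasurableSpace H] [BorelSpace H] {P : Measure Ω}

lemma memLp_inner_of_indepFun {X Y : Ω → H} {p : ENNReal} (hXY : IndepFun X Y P)
    (hX : MemLp X p P) (hY : MemLp Y p P) : MemLp (fun ω => ⟪X ω, Y ω⟫) p P :=
  memLp_bilin_of_indepFun hXY hX hY (innerSL ℝ)

lemma integral_inner_mul_inner_eq_zero [CompleteSpace H] [SecondCountableTopology H]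
    {ι : Type*} {u : ι → Ω → H} (hindep : iIndepFun u P) (hL2 : ∀ i, MemLp (u i) 2 P)
    {a b c d : ι} (hmean : ∫ ω, u a ω ∂P = 0)
    (hab : a ≠ b) (hac : a ≠ c) (had : a ≠ d) (hcd : c ≠ d) :
    ∫ ω, ⟪u a ω, u b ω⟫ * ⟪u c ω, u d ω⟫ ∂P = 0 := by
  have := hindep.isProbabilityMeasure
  have hrest : Integrable (fun ω => ⟪u c ω, u d ω⟫ • u b ω) P :=
    memLp_one_iff_integrable.1 <|
      (hL2 b).smul (memLp_inner_of_indepFun (hindep.indepFun hcd) (hL2 c) (hL2 d))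
  have hsmul : Measurable fun x : H × H × H => ⟪x.2.1, x.2.2⟫ • x.1 := by fun_prop
  have hind : IndepFun (u a) (fun ω => ⟪u c ω, u d ω⟫ • u b ω) P :=
    (indepFun_prodMk_three hindep (fun i => (hL2 i).1.aemeasurable) hab hac had).comp
      measurable_id hsmul
  calc ∫ ω, ⟪u a ω, u b ω⟫ * ⟪u c ω, u d ω⟫ ∂P
      = ∫ ω, ⟪u a ω, ⟪u c ω, u d ω⟫ • u b ω⟫ ∂P := by
        simp only [real_inner_smul_right, mul_comm]
    _ = ⟪∫ ω, u a ω ∂P, ∫ ω, ⟪u c ω, u d ω⟫ • u b ω ∂P⟫ :=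
        hind.integral_bilin ((hL2 a).integrable one_le_two) hrest (innerSL ℝ)
    _ = 0 := by rw [hmean, inner_zero_left]

end InnerProducts

section LaggedProducts

variable [MeasurableSpace H] [BorelSpace H] {P : Measure Ω} {u : ℤ → Ω → H} {j : ℤ}

lemma integrable_inner_mul_inner_lag (hindep : iIndepFun u P) (hL2 : ∀ t, MemLp (u t) 2 P)
    (hj : j ≠ 0) (t s : ℤ) :
    Integrable (fun ω => ⟪u t ω, u s ω⟫ * ⟪u (t - j) ω, u (s - j) ω⟫) P := by
  rcases eq_or_ne t s with rfl | hts
  · have hind : IndepFun (fun ω => ‖u t ω‖ ^ 2) (fun ω => ‖u (t - j) ω‖ ^ 2) P :=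
      (hindep.indepFun (by omega)).comp (measurable_norm.pow_const 2) (measurable_norm.pow_const 2)
    simpa only [real_inner_self_eq_norm_sq] using!
      hind.integrable_mul ((hL2 t).integrable_norm_pow two_ne_zero)
        ((hL2 (t - j)).integrable_norm_pow two_ne_zero)
  · have hlag : t - j ≠ s - j := by omega
    exact (memLp_inner_of_indepFun (hindep.indepFun hts) (hL2 t) (hL2 s)).integrable_mul
      (memLp_inner_of_indepFun (hindep.indepFun hlag) (hL2 _) (hL2 _))

lemma integral_inner_mul_inner_lag [CompleteSpace H] [SecondCountableTopology H]
    (hindep : iIndepFun u P) (hL2 : ∀ t, MemLp (u t) 2 P) (hmean : ∀ t, ∫ ω, u t ω ∂P = 0)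
    (hj : j ≠ 0) (t s : ℤ) :
    ∫ ω, ⟪u t ω, u s ω⟫ * ⟪u (t - j) ω, u (s - j) ω⟫ ∂P =
      if t = s then (∫ ω, ‖u t ω‖ ^ 2 ∂P) * ∫ ω, ‖u (t - j) ω‖ ^ 2 ∂P else 0 := by
  split_ifs with hts
  · subst hts
    simp only [real_inner_self_eq_norm_sq]
    exact integral_norm_pow_mul_norm_pow_of_indepFun (hindep.indepFun (by omega))
      (hL2 _).1.aemeasurable (hL2 _).1.aemeasurable 2 2
  rcases eq_or_ne t (s - j) with htsj | htsj
  · have hs : ∫ ω, ⟪u s ω, u t ω⟫ * ⟪u (t - j) ω, u (s - j) ω⟫ ∂P = 0 :=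
      integral_inner_mul_inner_eq_zero hindep hL2 (hmean s)
        (by omega) (by omega) (by omega) (by omega)
    simpa only [real_inner_comm] using hs
  · exact integral_inner_mul_inner_eq_zero hindep hL2 (hmean t)
      hts (by omega) htsj (by omega)

lemma integrable_hatCSq (hindep : iIndepFun u P) (hL2 : ∀ t, MemLp (u t) 2 P) (hj : j ≠ 0)
    (n : ℕ) : Integrable (hatCSq u n j) P :=
  (integrable_finsetSum _ fun t _ => integrable_finsetSum _ fun s _ =>
    integrable_inner_mul_inner_lag hindep hL2 hj t s).const_mul _

lemma integral_hatCSq [CompleteSpace H] [SecondCountableTopology H]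
    (hindep : iIndepFun u P) (hL2 : ∀ t, MemLp (u t) 2 P) (hmean : ∀ t, ∫ ω, u t ω ∂P = 0)
    (hj : j ≠ 0) (n : ℕ) :
    ∫ ω, hatCSq u n j ω ∂P = ((n : ℝ) ^ 2)⁻¹ *
      ∑ t ∈ Icc (j + 1) (n : ℤ), (∫ ω, ‖u t ω‖ ^ 2 ∂P) * ∫ ω, ‖u (t - j) ω‖ ^ 2 ∂P := by
  have hint := integrable_inner_mul_inner_lag hindep hL2 hj
  unfold hatCSq
  rw [integral_const_mul,
    integral_finsetSum _ fun t _ => integrable_finsetSum _ fun s _ => hint t s]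
  congr 1
  refine sum_congr rfl fun t ht => ?_
  rw [integral_finsetSum _ fun s _ => hint t s]
  simp only [integral_inner_mul_inner_lag hindep hL2 hmean hj, sum_ite_eq, ht, if_true]

end LaggedProducts

lemma integral_hatCSq_of_integral_norm_sq_eq [CompleteSpace H] [SecondCountableTopology H]
    [MeasurableSpace H] [BorelSpace H] {P : Measure Ω} {u : ℤ → Ω → H}
    (hindep : iIndepFun u P) (hL2 : ∀ t, MemLp (u t) 2 P) (hmean : ∀ t, ∫ ω, u t ω ∂P = 0)
    {σ2 : ℝ} (hσ2 : ∀ t, ∫ ω, ‖u t ω‖ ^ 2 ∂P = σ2) {n j : ℕ} (hj : 1 ≤ j) (hjn : j ≤ n) :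
    ∫ ω, hatCSq u n j ω ∂P = (1 - (j : ℝ) / n) * σ2 ^ 2 / n := by
  have hcard : #(Icc ((j : ℤ) + 1) n) = n - j := by rw [Int.card_Icc]; omega
  have hn : (n : ℝ) ≠ 0 := Nat.cast_ne_zero.2 (by omega)
  rw [integral_hatCSq hindep hL2 hmean (by omega)]
  simp only [hσ2, sum_const, hcard, nsmul_eq_mul, Nat.cast_sub hjn]
  field_simp

theorem expectation_hatCSq_and_hatQSq_general
    [CompleteSpace H] [SecondCountableTopology H] [MeasurableSpace H] [BorelSpace H]
    {P : Measure Ω} {u : ℤ → Ω → H} (hindep : iIndepFun u P)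
    (hL2 : ∀ t, MemLp (u t) 2 P) (hmean : ∀ t, ∫ ω, u t ω ∂P = 0)
    {σ2 : ℝ} (hσ2 : ∀ t, ∫ ω, ‖u t ω‖ ^ 2 ∂P = σ2) (n : ℕ) :
    (∀ j : ℕ, 1 ≤ j → j ≤ n →
      ∫ ω, hatCSq u n j ω ∂P = (1 - (j : ℝ) / n) * σ2 ^ 2 / n) ∧
    (∀ w : ℕ → ℝ, ∫ ω, 2 * ∑ j ∈ Icc 1 (n - 1), w j * hatCSq u n j ω ∂P =
      2 * σ2 ^ 2 * (n : ℝ)⁻¹ * ∑ j ∈ Icc 1 (n - 1), (1 - (j : ℝ) / n) * w j) := by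
  have hC (j : ℕ) (hj : 1 ≤ j) (hjn : j ≤ n) :
      ∫ ω, hatCSq u n j ω ∂P = (1 - (j : ℝ) / n) * σ2 ^ 2 / n :=
    integral_hatCSq_of_integral_norm_sq_eq hindep hL2 hmean hσ2 hj hjn
  refine ⟨hC, fun w => ?_⟩
  have hint : ∀ j ∈ Icc 1 (n - 1), Integrable (fun ω => w j * hatCSq u n j ω) P := fun j hj =>
    (integrable_hatCSq hindep hL2 (by grind) n).const_mul (w j)
  rw [integral_const_mul, integral_finsetSum _ hint, mul_sum, mul_sum]
  refine sum_congr rfl fun j hj => ?_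
  obtain ⟨hj1, hjn⟩ := mem_Icc.1 hj
  rw [integral_const_mul, hC j hj1 (by omega)]
  ring

/-- Equation (A.1): for a strong white noise with `σ² = E‖u₀‖²`, the expected squared
HS-norm of the sample autocovariance is `E‖Ĉ_n(j)‖₂² = (1 - j/n) σ⁴ / n` for
`1 ≤ j ≤ n - 1`, and consequently `E Q̂_n² = 2 σ⁴ n⁻¹ C_n(k)`. -/
theorem expectation_hatCSq_and_hatQSq
    [CompleteSpace H] [SecondCountableTopology H] [MeasurableSpace H] [BorelSpace H]
    (P : Measure Ω) [IsProbabilityMeasure P]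
    (u : ℤ → Ω → H)
    (hmeas : ∀ t, Measurable (u t))
    (hindep : iIndepFun u P)
    (hident : ∀ t, IdentDistrib (u t) (u 0) P P)
    (hint : Integrable (u 0) P)
    (hmean : ∫ ω, u 0 ω ∂P = 0)
    (hmom4 : Integrable (fun ω => ‖u 0 ω‖ ^ 4) P)
    (σ2 : ℝ) (hσ2 : σ2 = ∫ ω, ‖u 0 ω‖ ^ 2 ∂P)
    (k : ℝ → ℝ) (hk : ∀ x, k x ∈ Set.Icc (-1 : ℝ) 1) (p : ℝ) (hp : 0 < p) :
    (∀ n : ℕ, 1 ≤ n → ∀ j : ℕ, 1 ≤ j → j ≤ n - 1 →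
      ∫ ω, hatCSq u n (j : ℤ) ω ∂P = (1 - (j : ℝ) / n) * σ2 ^ 2 / n) ∧
    (∀ n : ℕ, 1 ≤ n →
      ∫ ω, hatQSq u k p n ω ∂P = 2 * σ2 ^ 2 * (n : ℝ)⁻¹ * Cn k p n) := by
  have hL2 : MemLp (u 0) 2 P := (memLp_two_iff_integrable_sq_norm hint.1).2 <|
    integrable_norm_pow_of_le hint.1 (by norm_num) hmom4
  have hgen := expectation_hatCSq_and_hatQSq_general hindep
    (fun t => (hident t).memLp_iff.2 hL2) (fun t => (hident t).integral_eq.trans hmean)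
    (fun t => (hident t).norm.sq.integral_eq.trans hσ2.symm)
  exact ⟨fun n _ j hj hjn => (hgen n).1 j hj (by omega),
    fun n _ => (hgen n).2 fun j => k ((j : ℝ) / p) ^ 2⟩

end
end

section
/- Suppose (u_t)_{t∈ℤ} is a strong white noise in H and set σ² = E‖u₀‖² and μ₄ = E‖u₀‖⁴. Then for every n ≥ 1 and every integer 1 ≤ j ≤ n−1, E[ ( Σ_{t=j+1}^n ( ‖u_t‖²·‖u_{t−j}‖² − σ⁴ ) )² ] ≤ 3·n·μ₄². -/
open MeasureTheory ProbabilityTheory Filter Finset Topology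
open scoped NNReal RealInnerProductSpace

noncomputable section

/-!
With `X t = ‖u t‖²` and `m = E X₀`, each lagged product `X t * X (t - j)` has mean `m² = σ⁴`, so
the left-hand side is the variance of the sum of these products. The products at times `s` and `t`
involve disjoint sets of independent variables, hence are uncorrelated, unless
`t ∈ {s, s + j, s - j}`. By `2 cov(Y, Z) ≤ Var Y + Var Z` the variance of the sum is therefore at
most three times the sum of the variances, and `Var (X t * X (t - j)) ≤ (E X₀²)² = μ₄²`.
-/

section LaggedProductVariance

variable {Ω : Type*} [MeasurableSpace Ω] {P : Measure Ω}

section Covariance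

variable [IsFiniteMeasure P]

lemma covariance_le_half_add_variance {X Y : Ω → ℝ} (hX : MemLp X 2 P) (hY : MemLp Y 2 P) :
    cov[X, Y; P] ≤ (Var[X; P] + Var[Y; P]) / 2 := by
  have hsub : 0 ≤ Var[X; P] - 2 * cov[X, Y; P] + Var[Y; P] :=
    variance_sub hX hY ▸ variance_nonneg _ _
  linarith

lemma variance_sum_le_sum_card_mul_variance {ι : Type*} {Y : ι → Ω → ℝ} {I : Finset ι}
    (hY : ∀ i ∈ I, MemLp (Y i) 2 P) :
    Var[∑ i ∈ I, Y i; P] ≤ ∑ i ∈ I, #{j ∈ I | cov[Y i, Y j; P] ≠ 0} * Var[Y i; P] := by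
  have hswap : ∑ i ∈ I, ∑ j ∈ I with cov[Y i, Y j; P] ≠ 0, Var[Y j; P] =
      ∑ i ∈ I, ∑ j ∈ I with cov[Y i, Y j; P] ≠ 0, Var[Y i; P] := by
    simp only [sum_filter]
    rw [sum_comm]
    simp only [covariance_comm]
  calc Var[∑ i ∈ I, Y i; P]
      = ∑ i ∈ I, ∑ j ∈ I with cov[Y i, Y j; P] ≠ 0, cov[Y i, Y j; P] := by
        simp only [variance_sum' hY, sum_filter_ne_zero]
    _ ≤ ∑ i ∈ I, ∑ j ∈ I with cov[Y i, Y j; P] ≠ 0, (Var[Y i; P] + Var[Y j; P]) / 2 :=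
        sum_le_sum fun i hi ↦ sum_le_sum fun j hj ↦
          covariance_le_half_add_variance (hY i hi) (hY j (mem_filter.1 hj).1)
    _ = ∑ i ∈ I, ∑ j ∈ I with cov[Y i, Y j; P] ≠ 0, Var[Y i; P] := by
        simp only [← sum_div, sum_add_distrib, hswap, add_self_div_two]
    _ = ∑ i ∈ I, #{j ∈ I | cov[Y i, Y j; P] ≠ 0} * Var[Y i; P] := by
        simp only [sum_const, nsmul_eq_mul]

end Covariance

section IndependentProduct

variable {X Y : Ω → ℝ}

lemma indepFun_sq_sq (h : IndepFun X Y P) : IndepFun (fun ω ↦ X ω ^ 2) (fun ω ↦ Y ω ^ 2) P :=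
  h.comp (φ := fun x : ℝ ↦ x ^ 2) (ψ := fun x : ℝ ↦ x ^ 2) (by fun_prop) (by fun_prop)

lemma memLp_two_mul_of_indepFun (h : IndepFun X Y P) (hX : MemLp X 2 P) (hY : MemLp Y 2 P) :
    MemLp (X * Y) 2 P := by
  refine (memLp_two_iff_integrable_sq (hX.1.mul hY.1)).2 ?_
  simp only [Pi.mul_apply, mul_pow]
  exact (indepFun_sq_sq h).integrable_mul hX.integrable_sq hY.integrable_sq

lemma variance_mul_le_of_indepFun [IsProbabilityMeasure P] (h : IndepFun X Y P)
    (hX : AEStronglyMeasurable X P) (hY : AEStronglyMeasurable Y P) :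
    Var[X * Y; P] ≤ (∫ ω, X ω ^ 2 ∂P) * ∫ ω, Y ω ^ 2 ∂P := by
  calc Var[X * Y; P] ≤ P[(X * Y) ^ 2] := variance_le_expectation_sq (hX.mul hY)
    _ = ∫ ω, X ω ^ 2 * Y ω ^ 2 ∂P := by simp only [Pi.pow_apply, Pi.mul_apply, mul_pow]
    _ = (∫ ω, X ω ^ 2 ∂P) * ∫ ω, Y ω ^ 2 ∂P :=
        (indepFun_sq_sq h).integral_fun_mul_eq_mul_integral (hX.pow 2) (hY.pow 2)

end IndependentProduct

section LaggedProduct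

variable {G : Type*} [AddGroup G] {d : G} {X : G → Ω → ℝ}

lemma indepFun_lag (hd : d ≠ 0) (hind : iIndepFun X P) (t : G) : IndepFun (X t) (X (t - d)) P :=
  hind.indepFun fun h ↦ hd (sub_eq_self.1 h.symm)

lemma memLp_two_mul_lag (hd : d ≠ 0) (hX : ∀ t, MemLp (X t) 2 P) (hind : iIndepFun X P) (t : G) :
    MemLp (X t * X (t - d)) 2 P :=
  memLp_two_mul_of_indepFun (indepFun_lag hd hind t) (hX t) (hX (t - d))

lemma covariance_mul_lag_eq_zero (hd : d ≠ 0) (hX : ∀ t, MemLp (X t) 2 P) (hind : iIndepFun X P)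
    {s t : G} (hts : t ≠ s) (hadd : t ≠ s + d) (hsub : t ≠ s - d) :
    cov[X s * X (s - d), X t * X (t - d); P] = 0 := by
  have hprod : IndepFun (X s * X (s - d)) (X t * X (t - d)) P :=
    hind.indepFun_mul_mul₀ (fun t ↦ (hX t).aemeasurable) s (s - d) t (t - d) hts.symm
      (fun h ↦ hadd (eq_sub_iff_add_eq.1 h).symm) hsub.symm
      (fun h ↦ hts (sub_left_injective h).symm)
  exact hprod.covariance_eq_zero (memLp_two_mul_lag hd hX hind s) (memLp_two_mul_lag hd hX hind t)

lemma variance_sum_mul_lag_le (hd : d ≠ 0) (hX : ∀ t, MemLp (X t) 2 P) (hind : iIndepFun X P)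
    (I : Finset G) :
    Var[∑ t ∈ I, X t * X (t - d); P] ≤ 3 * ∑ t ∈ I, Var[X t * X (t - d); P] := by
  classical
  have := hind.isProbabilityMeasure
  have hcard (s : G) : #{t ∈ I | cov[X s * X (s - d), X t * X (t - d); P] ≠ 0} ≤ 3 := by
    refine (card_le_card (t := {s, s + d, s - d}) fun t ht ↦ ?_).trans card_le_three
    contrapose! ht
    simp only [mem_insert, mem_singleton, not_or] at ht
    simp [covariance_mul_lag_eq_zero hd hX hind ht.1 ht.2.1 ht.2.2]
  rw [mul_sum]
  refine (variance_sum_le_sum_card_mul_variance fun t _ ↦ memLp_two_mul_lag hd hX hind t).trans ?_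
  gcongr with t
  · exact variance_nonneg _ _
  · exact_mod_cast hcard t

lemma integral_sq_sum_mul_lag_sub_le (hd : d ≠ 0) (hX₀ : MemLp (X 0) 2 P) (hind : iIndepFun X P)
    (hident : ∀ t, IdentDistrib (X t) (X 0) P P) (I : Finset G) :
    ∫ ω, (∑ t ∈ I, (X t ω * X (t - d) ω - P[X 0] ^ 2)) ^ 2 ∂P ≤
      3 * #I * (∫ ω, X 0 ω ^ 2 ∂P) ^ 2 := by
  have := hind.isProbabilityMeasure
  have hX (t : G) : MemLp (X t) 2 P := (hident t).memLp_iff.2 hX₀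
  have hlag (t : G) : IndepFun (X t) (X (t - d)) P := indepFun_lag hd hind t
  have hmem (t : G) : MemLp (X t * X (t - d)) 2 P := memLp_two_mul_lag hd hX hind t
  have hmean (t : G) : P[X t * X (t - d)] = P[X 0] ^ 2 := by
    rw [(hlag t).integral_mul_eq_mul_integral (hX _).1 (hX _).1, (hident t).integral_eq,
      (hident (t - d)).integral_eq, sq]
  have hsq (t : G) : ∫ ω, X t ω ^ 2 ∂P = ∫ ω, X 0 ω ^ 2 ∂P := (hident t).sq.integral_eq
  have hvar (t : G) : Var[X t * X (t - d); P] ≤ (∫ ω, X 0 ω ^ 2 ∂P) ^ 2 := by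
    simpa only [hsq, ← sq] using variance_mul_le_of_indepFun (hlag t) (hX _).1 (hX _).1
  have hsum : P[∑ t ∈ I, X t * X (t - d)] = ∑ _t ∈ I, P[X 0] ^ 2 := by
    rw [sum_congr rfl fun t _ ↦ (hmean t).symm]
    simp only [Finset.sum_apply]
    exact integral_finsetSum _ fun t _ ↦ (hmem t).integrable one_le_two
  calc ∫ ω, (∑ t ∈ I, (X t ω * X (t - d) ω - P[X 0] ^ 2)) ^ 2 ∂P
      = Var[∑ t ∈ I, X t * X (t - d); P] := by
        rw [variance_eq_integral (memLp_finsetSum' I fun t _ ↦ hmem t).aemeasurable, hsum]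
        simp only [Finset.sum_apply, Pi.mul_apply, sum_sub_distrib]
    _ ≤ 3 * ∑ t ∈ I, Var[X t * X (t - d); P] := variance_sum_mul_lag_le hd hX hind I
    _ ≤ 3 * ∑ _t ∈ I, (∫ ω, X 0 ω ^ 2 ∂P) ^ 2 := by gcongr with t; exact hvar t
    _ = 3 * #I * (∫ ω, X 0 ω ^ 2 ∂P) ^ 2 := by rw [sum_const, nsmul_eq_mul, mul_assoc]

end LaggedProduct

theorem sq_sum_norm_prod_centered_le_general {G : Type*} [AddGroup G]
    {H : Type*} [SeminormedAddCommGroup H] [MeasurableSpace H] [OpensMeasurableSpace H]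
    {u : G → Ω → H} (hindep : iIndepFun u P) (hident : ∀ t, IdentDistrib (u t) (u 0) P P)
    (hmom4 : Integrable (fun ω ↦ ‖u 0 ω‖ ^ 4) P)
    {σ2 μ4 : ℝ} (hσ2 : σ2 = ∫ ω, ‖u 0 ω‖ ^ 2 ∂P) (hμ4 : μ4 = ∫ ω, ‖u 0 ω‖ ^ 4 ∂P)
    {d : G} (hd : d ≠ 0) (I : Finset G) :
    ∫ ω, (∑ t ∈ I, (‖u t ω‖ ^ 2 * ‖u (t - d) ω‖ ^ 2 - σ2 ^ 2)) ^ 2 ∂P ≤ 3 * #I * μ4 ^ 2 := by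
  have hnormSq : Measurable fun x : H ↦ ‖x‖ ^ 2 := by fun_prop
  have hpow (ω : Ω) : ‖u 0 ω‖ ^ 4 = (‖u 0 ω‖ ^ 2) ^ 2 := by rw [← pow_mul]
  simp only [hpow] at hmom4 hμ4
  have hident' (t : G) := (hident t).comp hnormSq
  have hmem : MemLp (fun ω ↦ ‖u 0 ω‖ ^ 2) 2 P :=
    (memLp_two_iff_integrable_sq (hident' 0).aemeasurable_fst.aestronglyMeasurable).2 hmom4
  rw [hσ2, hμ4]
  exact integral_sq_sum_mul_lag_sub_le (X := fun t ω ↦ ‖u t ω‖ ^ 2) hd hmem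
    (hindep.comp _ fun _ ↦ hnormSq) hident' I

end LaggedProductVariance

/-- For a strong white noise with `σ² = E‖u₀‖²` and `μ₄ = E‖u₀‖⁴`, for all `n ≥ 1` and
`1 ≤ j ≤ n-1`, `E[(Σ_{t=j+1}^n (‖u_t‖²‖u_{t-j}‖² - σ⁴))²] ≤ 3 n μ₄²`. -/
theorem sq_sum_norm_prod_centered_le
    {H : Type*} [NormedAddCommGroup H] [InnerProductSpace ℝ H]
    [CompleteSpace H] [SecondCountableTopology H] [MeasurableSpace H] [BorelSpace H]
    {Ω : Type*} [MeasurableSpace Ω] (P : Measure Ω) [IsProbabilityMeasure P]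
    (u : ℤ → Ω → H)
    (hmeas : ∀ t, Measurable (u t))
    (hindep : iIndepFun u P)
    (hident : ∀ t, IdentDistrib (u t) (u 0) P P)
    (hint : Integrable (u 0) P)
    (hmean : ∫ ω, u 0 ω ∂P = 0)
    (hmom4 : Integrable (fun ω => ‖u 0 ω‖ ^ 4) P)
    (σ2 μ4 : ℝ) (hσ2 : σ2 = ∫ ω, ‖u 0 ω‖ ^ 2 ∂P) (hμ4 : μ4 = ∫ ω, ‖u 0 ω‖ ^ 4 ∂P) :
    ∀ n : ℕ, 1 ≤ n → ∀ j : ℕ, 1 ≤ j → j ≤ n - 1 →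
      ∫ ω, (∑ t ∈ Finset.Icc ((j : ℤ) + 1) (n : ℤ),
          (‖u t ω‖ ^ 2 * ‖u (t - j) ω‖ ^ 2 - σ2 ^ 2)) ^ 2 ∂P ≤ 3 * n * μ4 ^ 2 := by
  intro n _ j hj _
  have hcard : #(Finset.Icc ((j : ℤ) + 1) n) ≤ n := by rw [Int.card_Icc]; lia
  exact (sq_sum_norm_prod_centered_le_general hindep hident hmom4 hσ2 hμ4 (by lia) _).trans
    (by gcongr)

end
end

section
/- Suppose (u_t)_{t∈ℤ} is a strong white noise in H. Fix an integer l ≥ 1, a function k : ℝ → [−1,1] and p > 0, and for an integer t ≥ 2l+3 define U_t = 2·Σ_{j=1}^{l} k(j/p)²·Σ_{s=l+2}^{t−l−1} ⟨u_t,u_s⟩·⟨u_{t−j},u_{s−j}⟩. Then (U_t, F_{t−1}) is a martingale difference sequence: each U_t is integrable and E[ U_t | F_{t−1} ] = 0 almost surely, where F_{t−1} is the σ-algebra generated by {u_r : r ≤ t−1}. -/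
/-!
Every summand of `U_t` is linear in `u_t`, so `U_t = ⟪u_t, V⟫` with `V` a function of the `u_r`,
`r < t`. Pulling `V` out of the conditional expectation leaves `⟪E[u_t | F_{t-1}], V⟫`, and
`E[u_t | F_{t-1}] = E u_t = 0` by independence. The four indices in a summand of `U_t` are always
distinct, so independence reduces its integrability to that of the single factors.
-/

open MeasureTheory ProbabilityTheory Filter Finset Topology
open scoped NNReal RealInnerProductSpace

noncomputable section

variable {H : Type*} [NormedAddCommGroup H] [InnerProductSpace ℝ H]
variable {Ω : Type*} [MeasurableSpace Ω]

/-- `F_t`: the σ-algebra generated by `{u_r : r ≤ t}`. -/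
def genF [MeasurableSpace H] (u : ℤ → Ω → H) (t : ℤ) : MeasurableSpace Ω :=
  ⨆ r : {r : ℤ // r ≤ t}, MeasurableSpace.comap (u r) inferInstance

/-- The summand `U_{nt} = 2 Σ_{j=1}^{l} k(j/p)² Σ_{s=l+2}^{t-l-1} ⟨u_t,u_s⟩⟨u_{t-j},u_{s-j}⟩`. -/
def Umart (u : ℤ → Ω → H) (k : ℝ → ℝ) (p : ℝ) (l : ℕ) (t : ℤ) (ω : Ω) : ℝ :=
  2 * ∑ j ∈ Finset.Icc 1 l, k ((j : ℝ) / p) ^ 2 *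
    ∑ s ∈ Finset.Icc ((l : ℤ) + 2) (t - l - 1),
      ⟪u t ω, u s ω⟫ * ⟪u (t - j) ω, u (s - j) ω⟫

/-- The past factor `V` of `U_t = ⟪u_t, V⟫`: pulling `u_t` out of every summand of `Umart` leaves
this `H`-valued sum, which involves only innovations with index below `t`. -/
def pastFactor (u : ℤ → Ω → H) (k : ℝ → ℝ) (p : ℝ) (l : ℕ) (t : ℤ) (ω : Ω) : H :=
  (2 : ℝ) • ∑ j ∈ Finset.Icc 1 l, k ((j : ℝ) / p) ^ 2 •
    ∑ s ∈ Finset.Icc ((l : ℤ) + 2) (t - l - 1), ⟪u (t - j) ω, u (s - j) ω⟫ • u s ω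

theorem Umart_eq_inner_pastFactor {α : Type*} (u : ℤ → α → H) (k : ℝ → ℝ) (p : ℝ) (l : ℕ) (t : ℤ) :
    Umart u k p l t = fun ω => ⟪u t ω, pastFactor u k p l t ω⟫ := by
  funext ω
  simp only [Umart, pastFactor, inner_smul_right, inner_sum, mul_comm ⟪u t ω, _⟫]

theorem stronglyMeasurable_pastFactor {α : Type*} {m : MeasurableSpace α} {u : ℤ → α → H}
    {t : ℤ} (hu : ∀ r < t, StronglyMeasurable (u r)) (k : ℝ → ℝ) (p : ℝ) (l : ℕ) :
    StronglyMeasurable (pastFactor u k p l t) := by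
  refine .const_smul (Finset.stronglyMeasurable_fun_sum _ fun j hj => ?_) _
  refine .const_smul (Finset.stronglyMeasurable_fun_sum _ fun s hs => ?_) _
  rw [Finset.mem_Icc] at hj hs
  have inner_past : StronglyMeasurable fun ω => ⟪u (t - j) ω, u (s - j) ω⟫ :=
    (hu _ (by lia)).inner (hu _ (by lia))
  exact inner_past.smul (hu s (by lia))

theorem genF_eq_natural {E : Type*} [TopologicalSpace E] [TopologicalSpace.MetrizableSpace E]
    [MeasurableSpace E] [BorelSpace E] {u : ℤ → Ω → E}
    (hu : ∀ t, StronglyMeasurable (u t)) (t : ℤ) : genF u t = Filtration.natural u hu t :=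
  iSup_subtype

theorem condExp_inner_ae_eq_zero [CompleteSpace H] {μ : Measure Ω} {m : MeasurableSpace Ω}
    {X V : Ω → H} (hX : Integrable X μ) (hXm : μ[X | m] =ᵐ[μ] 0)
    (hV : AEStronglyMeasurable[m] V μ) (hXV : Integrable (fun ω => ⟪X ω, V ω⟫) μ) :
    μ[fun ω => ⟪X ω, V ω⟫ | m] =ᵐ[μ] 0 := by
  have pull_out : μ[fun ω => ⟪X ω, V ω⟫ | m] =ᵐ[μ] fun ω => ⟪μ[X | m] ω, V ω⟫ :=
    condExp_bilin_of_aestronglyMeasurable_right (innerSL ℝ) hV hXV hX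
  filter_upwards [pull_out, hXm] with ω hpull hzero
  rw [hpull, hzero, Pi.zero_apply, inner_zero_left, Pi.zero_apply]

section Integrability

variable [MeasurableSpace H] [BorelSpace H] {μ : Measure Ω}

theorem integrable_inner_of_indepFun {X Y : Ω → H} (hXY : IndepFun X Y μ)
    (hX : Integrable X μ) (hY : Integrable Y μ) : Integrable (fun ω => ⟪X ω, Y ω⟫) μ :=
  hXY.integrable_bilin hX hY (innerSL ℝ)

variable [SecondCountableTopology H]

theorem integrable_inner_mul_inner_of_iIndepFun {ι : Type*} {u : ι → Ω → H}
    (hindep : iIndepFun u μ) (hint : ∀ i, Integrable (u i) μ) {a b c d : ι}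
    (hab : a ≠ b) (hac : a ≠ c) (had : a ≠ d) (hbc : b ≠ c) (hbd : b ≠ d) (hcd : c ≠ d) :
    Integrable (fun ω => ⟪u a ω, u b ω⟫ * ⟪u c ω, u d ω⟫) μ := by
  have measurable_inner : Measurable fun x : H × H => ⟪x.1, x.2⟫ :=
    measurable_fst.inner measurable_snd
  have indep_pairs := hindep.indepFun_prodMk_prodMk₀ (fun i => (hint i).aemeasurable)
    a b c d hac had hbc hbd
  exact (indep_pairs.comp measurable_inner measurable_inner).integrable_mul
    (integrable_inner_of_indepFun (hindep.indepFun hab) (hint a) (hint b))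
    (integrable_inner_of_indepFun (hindep.indepFun hcd) (hint c) (hint d))

theorem integrable_Umart {u : ℤ → Ω → H} (hindep : iIndepFun u μ)
    (hint : ∀ t, Integrable (u t) μ) (k : ℝ → ℝ) (p : ℝ) (l : ℕ) (t : ℤ) :
    Integrable (Umart u k p l t) μ := by
  refine .const_mul (integrable_finsetSum _ fun j hj => ?_) _
  refine .const_mul (integrable_finsetSum _ fun s hs => ?_) _
  rw [Finset.mem_Icc] at hj hs
  -- The summation ranges force `s - j < s < t - j < t`.
  exact integrable_inner_mul_inner_of_iIndepFun hindep hint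
    (by lia) (by lia) (by lia) (by lia) (by lia) (by lia)

end Integrability

theorem Umart_martingale_difference_general
    [CompleteSpace H] [SecondCountableTopology H] [MeasurableSpace H] [BorelSpace H]
    (P : Measure Ω) (u : ℤ → Ω → H)
    (hmeas : ∀ t, Measurable (u t))
    (hindep : iIndepFun u P)
    (hint : ∀ t, Integrable (u t) P)
    (hmean : ∀ t, ∫ ω, u t ω ∂P = 0)
    (l : ℕ) (k : ℝ → ℝ) (p : ℝ) (t : ℤ) :
    Integrable (Umart u k p l t) P ∧ P[Umart u k p l t | genF u (t - 1)] =ᵐ[P] 0 := by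
  have hsm : ∀ r, StronglyMeasurable (u r) := fun r => (hmeas r).stronglyMeasurable
  have hU : Integrable (Umart u k p l t) P := integrable_Umart hindep hint k p l t
  refine ⟨hU, ?_⟩
  rw [genF_eq_natural hsm]
  have hcond : P[u t | Filtration.natural u hsm (t - 1)] =ᵐ[P] 0 := by
    have h := hindep.condExp_natural_ae_eq_of_lt hsm (sub_one_lt t)
    rwa [hmean t] at h
  have hpast : StronglyMeasurable[Filtration.natural u hsm (t - 1)] (pastFactor u k p l t) := by
    refine stronglyMeasurable_pastFactor (fun r hr => ?_) k p l
    exact (Filtration.stronglyAdapted_natural hsm).stronglyMeasurable_le (Int.le_sub_one_of_lt hr)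
  rw [Umart_eq_inner_pastFactor] at hU ⊢
  exact condExp_inner_ae_eq_zero (hint t) hcond hpast.aestronglyMeasurable hU

/-- For a strong white noise, `(U_t, F_{t-1})` for `t ≥ 2l+3` is a martingale difference
sequence: each `U_t` is integrable and `E[U_t | F_{t-1}] = 0` almost surely. -/
theorem Umart_martingale_difference
    [CompleteSpace H] [SecondCountableTopology H] [MeasurableSpace H] [BorelSpace H]
    (P : Measure Ω) [IsProbabilityMeasure P]
    (u : ℤ → Ω → H)
    (hmeas : ∀ t, Measurable (u t))
    (hindep : iIndepFun u P)
    (hident : ∀ t, IdentDistrib (u t) (u 0) P P)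
    (hint : Integrable (u 0) P)
    (hmean : ∫ ω, u 0 ω ∂P = 0)
    (hmom4 : Integrable (fun ω => ‖u 0 ω‖ ^ 4) P)
    (l : ℕ) (hl : 1 ≤ l)
    (k : ℝ → ℝ) (hk : ∀ x, k x ∈ Set.Icc (-1 : ℝ) 1) (p : ℝ) (hp : 0 < p) :
    ∀ t : ℤ, 2 * (l : ℤ) + 3 ≤ t →
      Integrable (Umart u k p l t) P ∧
      P[Umart u k p l t | genF u (t - 1)] =ᵐ[P] 0 :=
  fun t _ => Umart_martingale_difference_general P u hmeas hindep
    (fun r => (hident r).integrable_iff.2 hint)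
    (fun r => (hident r).integral_eq.trans hmean) l k p t

end
end

section
/- Suppose (u_t)_{t∈ℤ} is a strong white noise in H. Then there exists a constant C > 0, depending only on the distribution of u₀, such that for all integers j ≥ 1 and a ≤ b, E[ ( Σ_{s=a}^{b} Σ_{r=a}^{b} ⟨u_s,u_r⟩·⟨u_{s−j},u_{r−j}⟩ )² ] ≤ C·(b−a+1)². (The double sum inside is the squared Hilbert–Schmidt norm ‖H‖₂² of the operator H = Σ_{s=a}^{b} u_s ⊗ u_{s−j}, so the claim is E‖H‖₂⁴ = O((b−a+1)²).) -/
open MeasureTheory ProbabilityTheory Filter Finset Topology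
open scoped NNReal RealInnerProductSpace

noncomputable section

/-!
With `X s = u s ⊗ u (s - j)`, the double sum is `‖∑ s ∈ I, X s‖ ^ 2` in `H ⊗ H`, so the claim is a
fourth moment bound for the partial sums `S` of the `X s`. Adding one term,
`‖S + X‖ ^ 4 = (‖S‖ ^ 2 + 2 * ⟪S, X⟫ + ‖X‖ ^ 2) ^ 2`, and the only contribution that would be too
large is `4 * ‖S‖ ^ 2 * ⟪S, X⟫`. When `X = X n` is added after all earlier terms, this equals
`⟪W, u n⟫` with `W` a function of the variables preceding the centred variable `u n` (here
`n - j < n` is used), so it has mean zero. Young's inequality with a weight proportional to the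
number of terms absorbs the rest, and `E ‖S‖ ^ 4` grows quadratically.
-/

section FourthMoment

variable {E Ω : Type*} [NormedAddCommGroup E] [InnerProductSpace ℝ E]
  {mΩ : MeasurableSpace Ω} {μ : Measure Ω}

theorem norm_add_pow_four_le (x y : E) {c : ℝ} (hc : 0 < c) :
    ‖x + y‖ ^ 4 ≤ (1 + c⁻¹) * ‖x‖ ^ 4 + 4 * (‖x‖ ^ 2 * ⟪x, y⟫) + (16 * c + 3) * ‖y‖ ^ 4 := by
  have hinner : ⟪x, y⟫ ≤ ‖x‖ * ‖y‖ := real_inner_le_norm x y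
  have hinner_sq : ⟪x, y⟫ ^ 2 ≤ (‖x‖ * ‖y‖) ^ 2 := sq_le_sq.2 <| by
    simpa [abs_mul] using abs_real_inner_le_norm x y
  have hcubic : 4 * (⟪x, y⟫ * ‖y‖ ^ 2) ≤ 2 * ‖x‖ ^ 2 * ‖y‖ ^ 2 + 2 * ‖y‖ ^ 4 := by
    nlinarith [mul_le_mul_of_nonneg_right hinner (sq_nonneg ‖y‖),
      sq_nonneg (‖x‖ * ‖y‖ - ‖y‖ ^ 2)]
  have hyoung : 8 * (‖x‖ ^ 2 * ‖y‖ ^ 2) ≤ c⁻¹ * ‖x‖ ^ 4 + 16 * c * ‖y‖ ^ 4 := by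
    have hsq : 0 ≤ c⁻¹ * (‖x‖ ^ 2 - 4 * c * ‖y‖ ^ 2) ^ 2 := by positivity
    have hexpand : c⁻¹ * (‖x‖ ^ 2 - 4 * c * ‖y‖ ^ 2) ^ 2
        = c⁻¹ * ‖x‖ ^ 4 - 8 * (‖x‖ ^ 2 * ‖y‖ ^ 2) + 16 * c * ‖y‖ ^ 4 := by
      field_simp
      ring
    linarith
  calc ‖x + y‖ ^ 4 = (‖x‖ ^ 2 + 2 * ⟪x, y⟫ + ‖y‖ ^ 2) ^ 2 := by
        rw [← norm_add_sq_real]; ring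
    _ = ‖x‖ ^ 4 + 4 * (‖x‖ ^ 2 * ⟪x, y⟫) + 2 * (‖x‖ ^ 2 * ‖y‖ ^ 2) + 4 * ⟪x, y⟫ ^ 2
        + 4 * (⟪x, y⟫ * ‖y‖ ^ 2) + ‖y‖ ^ 4 := by ring
    _ ≤ _ := by linarith

theorem abs_norm_sq_mul_inner_le (x y : E) : |‖x‖ ^ 2 * ⟪x, y⟫| ≤ ‖x‖ ^ 4 + ‖y‖ ^ 4 :=
  calc |‖x‖ ^ 2 * ⟪x, y⟫| = ‖x‖ ^ 2 * |⟪x, y⟫| := by rw [abs_mul, abs_of_nonneg (sq_nonneg _)]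
    _ ≤ ‖x‖ ^ 2 * (‖x‖ * ‖y‖) := by gcongr; exact abs_real_inner_le_norm x y
    _ ≤ ‖x‖ ^ 4 + ‖y‖ ^ 4 := by
      nlinarith [sq_nonneg (‖x‖ ^ 2 - ‖x‖ * ‖y‖), sq_nonneg (‖x‖ ^ 2 - ‖y‖ ^ 2)]

theorem integrable_norm_sq_mul_inner {S X : Ω → E} (hS : MemLp S 4 μ) (hX : MemLp X 4 μ) :
    Integrable (fun ω => ‖S ω‖ ^ 2 * ⟪S ω, X ω⟫) μ :=
  ((hS.integrable_norm_pow four_ne_zero).add (hX.integrable_norm_pow four_ne_zero)).mono'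
    ((hS.1.norm.pow 2).mul (hS.1.inner hX.1)) <|
    .of_forall fun ω => abs_norm_sq_mul_inner_le (S ω) (X ω)

theorem integral_norm_add_pow_four_le {S X : Ω → E} (hS : MemLp S 4 μ) (hX : MemLp X 4 μ)
    (horth : ∫ ω, ‖S ω‖ ^ 2 * ⟪S ω, X ω⟫ ∂μ = 0) {c : ℝ} (hc : 0 < c) :
    ∫ ω, ‖S ω + X ω‖ ^ 4 ∂μ
      ≤ (1 + c⁻¹) * ∫ ω, ‖S ω‖ ^ 4 ∂μ + (16 * c + 3) * ∫ ω, ‖X ω‖ ^ 4 ∂μ := by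
  have hS4 : Integrable (fun ω => ‖S ω‖ ^ 4) μ := hS.integrable_norm_pow four_ne_zero
  have hX4 : Integrable (fun ω => ‖X ω‖ ^ 4) μ := hX.integrable_norm_pow four_ne_zero
  have hSX4 : Integrable (fun ω => ‖S ω + X ω‖ ^ 4) μ :=
    (hS.add hX).integrable_norm_pow four_ne_zero
  have hcross : Integrable (fun ω => ‖S ω‖ ^ 2 * ⟪S ω, X ω⟫) μ := integrable_norm_sq_mul_inner hS hX
  have hhead : Integrable
      (fun ω => (1 + c⁻¹) * ‖S ω‖ ^ 4 + 4 * (‖S ω‖ ^ 2 * ⟪S ω, X ω⟫)) μ :=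
    (hS4.const_mul _).add (hcross.const_mul _)
  have hlast : Integrable (fun ω => (16 * c + 3) * ‖X ω‖ ^ 4) μ := hX4.const_mul _
  calc ∫ ω, ‖S ω + X ω‖ ^ 4 ∂μ
      ≤ ∫ ω, ((1 + c⁻¹) * ‖S ω‖ ^ 4 + 4 * (‖S ω‖ ^ 2 * ⟪S ω, X ω⟫)
          + (16 * c + 3) * ‖X ω‖ ^ 4) ∂μ :=
        integral_mono hSX4 (hhead.add hlast) fun ω => norm_add_pow_four_le (S ω) (X ω) hc
    _ = (1 + c⁻¹) * ∫ ω, ‖S ω‖ ^ 4 ∂μ + 4 * ∫ ω, ‖S ω‖ ^ 2 * ⟪S ω, X ω⟫ ∂μ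
          + (16 * c + 3) * ∫ ω, ‖X ω‖ ^ 4 ∂μ := by
        rw [integral_add hhead hlast, integral_add (hS4.const_mul _) (hcross.const_mul _)]
        simp only [integral_const_mul]
    _ = _ := by rw [horth, mul_zero, add_zero]

theorem integral_norm_sum_pow_four_le {ι : Type*} [LinearOrder ι] {X : ι → Ω → E} {M : ℝ}
    (hX : ∀ i, MemLp (X i) 4 μ) (hM : ∀ i, ∫ ω, ‖X i ω‖ ^ 4 ∂μ ≤ M)
    (horth : ∀ (s : Finset ι) (i : ι), (∀ k ∈ s, k < i) →
      ∫ ω, ‖∑ k ∈ s, X k ω‖ ^ 2 * ⟪∑ k ∈ s, X k ω, X i ω⟫ ∂μ = 0) (s : Finset ι) :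
    ∫ ω, ‖∑ k ∈ s, X k ω‖ ^ 4 ∂μ ≤ 19 * M * (#s : ℝ) ^ 2 := by
  induction s using Finset.induction_on_max with
  | empty => simp
  | insert i s hlt ih =>
    have hi : i ∉ s := fun hmem => lt_irrefl i (hlt i hmem)
    have hM0 : 0 ≤ M := (integral_nonneg fun ω => by positivity).trans (hM i)
    have hS : MemLp (fun ω => ∑ k ∈ s, X k ω) 4 μ := memLp_finsetSum s fun k _ => hX k
    set n : ℝ := (#s : ℝ)
    have hn : 0 ≤ n := Nat.cast_nonneg _
    have hn_div : (n + 1)⁻¹ * n ^ 2 ≤ n := by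
      rw [inv_mul_le_iff₀ (by positivity)]
      nlinarith
    calc ∫ ω, ‖∑ k ∈ insert i s, X k ω‖ ^ 4 ∂μ = ∫ ω, ‖∑ k ∈ s, X k ω + X i ω‖ ^ 4 ∂μ := by
          simp only [sum_insert hi, add_comm]
      _ ≤ (1 + (n + 1)⁻¹) * ∫ ω, ‖∑ k ∈ s, X k ω‖ ^ 4 ∂μ
            + (16 * (n + 1) + 3) * ∫ ω, ‖X i ω‖ ^ 4 ∂μ :=
          integral_norm_add_pow_four_le hS (hX i) (horth s i hlt) (by positivity)
      _ ≤ (1 + (n + 1)⁻¹) * (19 * M * n ^ 2) + (16 * (n + 1) + 3) * M := by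
          gcongr
          exact hM i
      _ = M * (19 * n ^ 2 + 19 * ((n + 1)⁻¹ * n ^ 2) + 16 * n + 19) := by ring
      _ ≤ M * (19 * (n + 1) ^ 2) := by gcongr; linarith
      _ = 19 * M * (#(insert i s) : ℝ) ^ 2 := by
          rw [card_insert_of_notMem hi]
          push_cast
          ring

end FourthMoment

section Tensor

open scoped TensorProduct

variable {E F ι Ω : Type*} [NormedAddCommGroup E] [InnerProductSpace ℝ E]
  [NormedAddCommGroup F] [InnerProductSpace ℝ F]

theorem norm_sum_tmul_sq (s : Finset ι) (x : ι → E) (y : ι → F) :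
    ‖∑ k ∈ s, x k ⊗ₜ[ℝ] y k‖ ^ 2 = ∑ k ∈ s, ∑ l ∈ s, ⟪x k, x l⟫ * ⟪y k, y l⟫ := by
  simp only [← real_inner_self_eq_norm_sq, sum_inner, inner_sum, TensorProduct.inner_tmul]
  exact sum_comm

theorem inner_sum_tmul_tmul (s : Finset ι) (x : ι → E) (y : ι → F) (v : E) (w : F) :
    ⟪∑ k ∈ s, x k ⊗ₜ[ℝ] y k, v ⊗ₜ[ℝ] w⟫ = ⟪∑ k ∈ s, ⟪y k, w⟫ • x k, v⟫ := by
  simp only [sum_inner, TensorProduct.inner_tmul, real_inner_smul_left, mul_comm]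

theorem stronglyMeasurable_tmul {_ : MeasurableSpace Ω} {f : Ω → E} {g : Ω → F}
    (hf : StronglyMeasurable f) (hg : StronglyMeasurable g) :
    StronglyMeasurable fun ω => f ω ⊗ₜ[ℝ] g ω :=
  TensorProduct.continuous_tmul.comp_stronglyMeasurable (hf.prodMk hg)

end Tensor

section Noise

open scoped TensorProduct

variable {E F ι Ω : Type*} [NormedAddCommGroup E] [InnerProductSpace ℝ E]
  [NormedAddCommGroup F] [InnerProductSpace ℝ F] {m mΩ : MeasurableSpace Ω} {μ : Measure Ω}

theorem integral_inner_eq_zero_of_condExp_eq_zero [CompleteSpace E] (hm : m ≤ mΩ)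
    [SigmaFinite (μ.trim hm)] {W D : Ω → E} (hW : StronglyMeasurable[m] W) (hD : Integrable D μ)
    (hD0 : μ[D | m] =ᵐ[μ] 0) (hWD : Integrable (fun ω => ⟪W ω, D ω⟫) μ) :
    ∫ ω, ⟪W ω, D ω⟫ ∂μ = 0 := by
  have hpull : μ[fun ω => ⟪W ω, D ω⟫ | m] =ᵐ[μ] fun ω => ⟪W ω, (μ[D | m]) ω⟫ :=
    condExp_bilin_of_stronglyMeasurable_left (innerSL ℝ) hW hWD hD
  calc ∫ ω, ⟪W ω, D ω⟫ ∂μ = ∫ ω, (μ[fun ω => ⟪W ω, D ω⟫ | m]) ω ∂μ := (integral_condExp hm).symm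
    _ = ∫ ω, ⟪W ω, (μ[D | m]) ω⟫ ∂μ := integral_congr_ae hpull
    _ = 0 := integral_eq_zero_of_ae <| by
      filter_upwards [hD0] with ω hω
      simp [hω]

theorem integral_norm_sq_mul_inner_sum_tmul_eq_zero [CompleteSpace E] (hm : m ≤ mΩ)
    [SigmaFinite (μ.trim hm)] {s : Finset ι} {x : ι → Ω → E} {y : ι → Ω → F} {D : Ω → E} {w : Ω → F}
    (hx : ∀ k ∈ s, StronglyMeasurable[m] (x k)) (hy : ∀ k ∈ s, StronglyMeasurable[m] (y k))
    (hw : StronglyMeasurable[m] w) (hD : Integrable D μ) (hD0 : μ[D | m] =ᵐ[μ] 0)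
    (hint : Integrable (fun ω => ‖∑ k ∈ s, x k ω ⊗ₜ[ℝ] y k ω‖ ^ 2
      * ⟪∑ k ∈ s, x k ω ⊗ₜ[ℝ] y k ω, D ω ⊗ₜ[ℝ] w ω⟫) μ) :
    ∫ ω, ‖∑ k ∈ s, x k ω ⊗ₜ[ℝ] y k ω‖ ^ 2
      * ⟪∑ k ∈ s, x k ω ⊗ₜ[ℝ] y k ω, D ω ⊗ₜ[ℝ] w ω⟫ ∂μ = 0 := by
  simp only [inner_sum_tmul_tmul, ← real_inner_smul_left] at hint ⊢
  refine integral_inner_eq_zero_of_condExp_eq_zero hm (.smul (.pow (.norm ?_) 2) ?_) hD hD0 hint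
  · exact stronglyMeasurable_fun_sum s fun k hk => stronglyMeasurable_tmul (hx k hk) (hy k hk)
  · exact stronglyMeasurable_fun_sum s fun k hk => ((hy k hk).inner hw).smul (hx k hk)

section IndepFun

variable [MeasurableSpace E] [OpensMeasurableSpace E] [MeasurableSpace F] [OpensMeasurableSpace F]
  {X : Ω → E} {Y : Ω → F}

theorem integral_norm_tmul_pow_of_indepFun (hXY : IndepFun X Y μ) (hX : AEStronglyMeasurable X μ)
    (hY : AEStronglyMeasurable Y μ) (p : ℕ) :
    ∫ ω, ‖X ω ⊗ₜ[ℝ] Y ω‖ ^ p ∂μ = (∫ ω, ‖X ω‖ ^ p ∂μ) * ∫ ω, ‖Y ω‖ ^ p ∂μ := by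
  simp only [TensorProduct.norm_tmul, mul_pow]
  exact (hXY.comp (measurable_norm.pow_const p) (measurable_norm.pow_const p))
    |>.integral_fun_mul_eq_mul_integral (hX.norm.pow p) (hY.norm.pow p)

theorem memLp_tmul_of_indepFun (hXY : IndepFun X Y μ) {p : ℕ} (hp : p ≠ 0)
    (hX : MemLp X p μ) (hY : MemLp Y p μ) : MemLp (fun ω => X ω ⊗ₜ[ℝ] Y ω) p μ := by
  have hmeas : AEStronglyMeasurable (fun ω => X ω ⊗ₜ[ℝ] Y ω) μ :=
    TensorProduct.continuous_tmul.comp_aestronglyMeasurable (hX.1.prodMk hY.1)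
  rw [← integrable_norm_rpow_iff hmeas (mod_cast hp) (ENNReal.natCast_ne_top p)]
  simp only [TensorProduct.norm_tmul, mul_pow, ENNReal.toReal_natCast, Real.rpow_natCast]
  exact (hXY.comp (measurable_norm.pow_const p) (measurable_norm.pow_const p)).integrable_mul
    (hX.integrable_norm_pow hp) (hY.integrable_norm_pow hp)

end IndepFun

theorem integral_norm_sq_mul_inner_sum_tmul_eq_zero_of_iIndepFun [LinearOrder ι] [CompleteSpace E]
    [SecondCountableTopology E] [MeasurableSpace E] [BorelSpace E] {u : ι → Ω → E}
    (hu : iIndepFun u μ) (hmeas : ∀ t, Measurable (u t)) {n : ι} (hmean : ∫ ω, u n ω ∂μ = 0)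
    (hint : Integrable (u n) μ) {σ : ι → ι} (hσ : ∀ t, σ t < t)
    {s : Finset ι} (hn : ∀ k ∈ s, k < n)
    (hcross : Integrable (fun ω => ‖∑ k ∈ s, u k ω ⊗ₜ[ℝ] u (σ k) ω‖ ^ 2
      * ⟪∑ k ∈ s, u k ω ⊗ₜ[ℝ] u (σ k) ω, u n ω ⊗ₜ[ℝ] u (σ n) ω⟫) μ) :
    ∫ ω, ‖∑ k ∈ s, u k ω ⊗ₜ[ℝ] u (σ k) ω‖ ^ 2
      * ⟪∑ k ∈ s, u k ω ⊗ₜ[ℝ] u (σ k) ω, u n ω ⊗ₜ[ℝ] u (σ n) ω⟫ ∂μ = 0 := by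
  have := hu.isProbabilityMeasure
  have hsm : ∀ t, StronglyMeasurable (u t) := fun t => (hmeas t).stronglyMeasurable
  obtain ⟨l, hln, hl⟩ : ∃ l < n, ∀ k ∈ insert (σ n) s, k ≤ l :=
    ⟨(insert (σ n) s).max' (insert_nonempty _ _), (max'_lt_iff _ _).2 <| by simpa [hσ] using hn,
      fun k hk => le_max' _ k hk⟩
  have hpast : ∀ k ≤ l, StronglyMeasurable[Filtration.natural u hsm l] (u k) := fun k hk =>
    (Filtration.stronglyAdapted_natural hsm k).mono ((Filtration.natural u hsm).mono hk)
  have hcentred : μ[u n | Filtration.natural u hsm l] =ᵐ[μ] 0 := by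
    filter_upwards [hu.condExp_natural_ae_eq_of_lt hsm hln] with ω hω
    simp [hω, hmean]
  have hs : ∀ k ∈ s, k ≤ l := fun k hk => hl k (mem_insert_of_mem hk)
  exact integral_norm_sq_mul_inner_sum_tmul_eq_zero ((Filtration.natural u hsm).le l)
    (fun k hk => hpast k (hs k hk)) (fun k hk => hpast (σ k) ((hσ k).le.trans (hs k hk)))
    (hpast (σ n) (hl _ (mem_insert_self _ _))) hint hcentred hcross

end Noise

theorem fourth_moment_H_bound_general
    {H : Type*} [NormedAddCommGroup H] [InnerProductSpace ℝ H]
    [CompleteSpace H] [SecondCountableTopology H] [MeasurableSpace H] [BorelSpace H]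
    {Ω : Type*} [MeasurableSpace Ω] (P : Measure Ω) {ι : Type*} [LinearOrder ι]
    (u : ι → Ω → H)
    (hmeas : ∀ t, Measurable (u t))
    (hindep : iIndepFun u P)
    (hmean : ∀ t, ∫ ω, u t ω ∂P = 0)
    (hmom4 : ∀ t, Integrable (fun ω => ‖u t ω‖ ^ 4) P)
    {M : ℝ} (hM : ∀ t, ∫ ω, ‖u t ω‖ ^ 4 ∂P ≤ M)
    {σ : ι → ι} (hσ : ∀ t, σ t < t) (I : Finset ι) :
    ∫ ω, (∑ s ∈ I, ∑ r ∈ I, ⟪u s ω, u r ω⟫ * ⟪u (σ s) ω, u (σ r) ω⟫) ^ 2 ∂P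
      ≤ 19 * M ^ 2 * (#I : ℝ) ^ 2 := by
  have := hindep.isProbabilityMeasure
  have hmemLp : ∀ t, MemLp (u t) (4 : ℕ) P := fun t =>
    (integrable_norm_rpow_iff (hmeas t).aestronglyMeasurable (by simp)
      (ENNReal.natCast_ne_top 4)).1 (mod_cast hmom4 t)
  have hpair : ∀ t, IndepFun (u t) (u (σ t)) P := fun t => hindep.indepFun (hσ t).ne'
  have hX : ∀ t, MemLp (fun ω => u t ω ⊗ₜ[ℝ] u (σ t) ω) 4 P := fun t =>
    memLp_tmul_of_indepFun (hpair t) four_ne_zero (hmemLp t) (hmemLp (σ t))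
  have hXM : ∀ t, ∫ ω, ‖u t ω ⊗ₜ[ℝ] u (σ t) ω‖ ^ 4 ∂P ≤ M ^ 2 := fun t => by
    rw [integral_norm_tmul_pow_of_indepFun (hpair t) (hmemLp t).1 (hmemLp (σ t)).1, sq]
    gcongr
    exacts [(integral_nonneg fun ω => by positivity).trans (hM t), hM t, hM (σ t)]
  simp only [← norm_sum_tmul_sq I _ (fun t => u (σ t) _), ← pow_mul]
  exact integral_norm_sum_pow_four_le hX hXM (fun s n hn =>
    integral_norm_sq_mul_inner_sum_tmul_eq_zero_of_iIndepFun hindep hmeas (hmean n)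
      ((hmemLp n).integrable (by norm_num)) hσ hn
      (integrable_norm_sq_mul_inner (memLp_finsetSum s fun k _ => hX k) (hX n))) I

/-- Equation (A.7): for a strong white noise there is a constant `C > 0` (depending only
on the distribution of `u₀`) such that for all `j ≥ 1` and `a ≤ b`,
`E[(Σ_{s=a}^b Σ_{r=a}^b ⟨u_s,u_r⟩⟨u_{s-j},u_{r-j}⟩)²] ≤ C (b-a+1)²`, i.e. the fourth
moment of the HS-norm of `H = Σ_{s=a}^b u_s ⊗ u_{s-j}` is `O((b-a+1)²)`. -/
theorem fourth_moment_H_bound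
    {H : Type*} [NormedAddCommGroup H] [InnerProductSpace ℝ H]
    [CompleteSpace H] [SecondCountableTopology H] [MeasurableSpace H] [BorelSpace H]
    {Ω : Type*} [MeasurableSpace Ω] (P : Measure Ω) [IsProbabilityMeasure P]
    (u : ℤ → Ω → H)
    (hmeas : ∀ t, Measurable (u t))
    (hindep : iIndepFun u P)
    (hident : ∀ t, IdentDistrib (u t) (u 0) P P)
    (hint : Integrable (u 0) P)
    (hmean : ∫ ω, u 0 ω ∂P = 0)
    (hmom4 : Integrable (fun ω => ‖u 0 ω‖ ^ 4) P) :
    ∃ C > (0 : ℝ), ∀ j : ℤ, 1 ≤ j → ∀ a b : ℤ, a ≤ b →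
      ∫ ω, (∑ s ∈ Finset.Icc a b, ∑ r ∈ Finset.Icc a b,
          ⟪u s ω, u r ω⟫ * ⟪u (s - j) ω, u (r - j) ω⟫) ^ 2 ∂P
        ≤ C * ((b - a + 1 : ℤ) : ℝ) ^ 2 := by
  have hident4 (t : ℤ) : IdentDistrib (fun ω => ‖u t ω‖ ^ 4) (fun ω => ‖u 0 ω‖ ^ 4) P P :=
    (hident t).comp (measurable_norm.pow_const 4)
  refine ⟨19 * (∫ ω, ‖u 0 ω‖ ^ 4 ∂P) ^ 2 + 1, by positivity, fun j hj a b hab => ?_⟩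
  have hcard : ((b - a + 1 : ℤ) : ℝ) = #(Icc a b) := by
    rw [sub_add_eq_add_sub, ← Int.card_Icc_of_le a b (by lia), Int.cast_natCast]
  rw [hcard]
  refine (fourth_moment_H_bound_general P u hmeas hindep
    (fun t => (hident t).integral_eq.trans hmean) (fun t => (hident4 t).integrable_iff.2 hmom4)
    (fun t => (hident4 t).integral_eq.le) (σ := (· - j)) (fun t => by lia) (Icc a b)).trans ?_
  gcongr
  exact le_add_of_nonneg_right zero_le_one

end
end

section
/- Let k be a kernel and (p_n) a bandwidth, and define D_n(k) = Σ_{j=1}^{n−2} (1−j/n)·(1−(j+1)/n)·k(j/p_n)⁴. Then D_n(k)/p_n → ∫₀^∞ k(x)⁴ dx as n → ∞; equivalently, D_n(k) = D(k)·p_n + o(p_n) with D(k) = ∫₀^∞ k(x)⁴ dx (which is finite under the kernel assumptions). -/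
open MeasureTheory Filter Finset Topology

noncomputable section

/-!
A sum `p⁻¹ ∑_{j ≥ 1} h j` is the integral over `(0, ∞)` of the step function `x ↦ h ⌈x p⌉`. For a
weighted Riemann sum, `h j = w j • f (j / p)`; since `⌈x p⌉ / p` tends to `x` from above, the step
functions converge at every continuity point of `f`, and any antitone integrable majorant of `f`
dominates all of them. Dominated convergence then gives the limit. For `Dn` the weights tend to `1`
at each fixed `x` because `⌈x pₙ⌉ / n` is of the order of `pₙ / n`.
-/

section RiemannSums

variable {E : Type*} [NormedAddCommGroup E]

theorem aestronglyMeasurable_of_ae_continuousAt {X Y : Type*} [TopologicalSpace X]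
    [MeasurableSpace X] [OpensMeasurableSpace X] [SecondCountableTopology X]
    [TopologicalSpace.PseudoMetrizableSpace X] [TopologicalSpace Y]
    [TopologicalSpace.PseudoMetrizableSpace Y] {f : X → Y} {μ : Measure X}
    (hf : ∀ᵐ x ∂μ, ContinuousAt f x) : AEStronglyMeasurable f μ := by
  let := TopologicalSpace.pseudoMetrizableSpacePseudoMetric Y
  have hmeas : MeasurableSet {x | ContinuousAt f x} := (IsGδ.setOfPred_continuousAt f).measurableSet
  have hcont : ContinuousOn f {x | ContinuousAt f x} := fun _ hx => hx.continuousWithinAt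
  rw [← Measure.restrict_eq_self_of_ae_mem hf]
  exact hcont.aestronglyMeasurable hmeas

/-- `f` is dominated in norm on `(0, ∞)` by a nonincreasing integrable function, the condition
under which right-endpoint Riemann sums over the whole half-line stay dominated. The majorant may
be unbounded near `0`, so this is slightly weaker than the bound in direct Riemann
integrability. -/
def HasAntitoneMajorant (f : ℝ → E) : Prop :=
  ∃ g : ℝ → ℝ, AntitoneOn g (Set.Ioi 0) ∧ IntegrableOn g (Set.Ioi 0) ∧ ∀ x > 0, ‖f x‖ ≤ g x

theorem HasAntitoneMajorant.integrableOn {f : ℝ → E} (hf : HasAntitoneMajorant f)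
    (hmeas : AEStronglyMeasurable f (volume.restrict (Set.Ioi 0))) :
    IntegrableOn f (Set.Ioi 0) := by
  obtain ⟨g, -, hg, hfg⟩ := hf
  exact hg.mono' hmeas (ae_restrict_of_forall_mem measurableSet_Ioi hfg)

theorem rpow_neg_le_two_rpow_mul_add_one_rpow_neg {x s : ℝ} (hx : 1 ≤ x) (hs : 0 ≤ s) :
    x ^ (-s) ≤ 2 ^ s * (x + 1) ^ (-s) := by
  have hx₀ : 0 < x := by positivity
  calc x ^ (-s) = 2 ^ s * (2 * x) ^ (-s) := by
        rw [Real.mul_rpow zero_le_two hx₀.le, ← mul_assoc, ← Real.rpow_add two_pos,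
          add_neg_cancel, Real.rpow_zero, one_mul]
    _ ≤ 2 ^ s * (x + 1) ^ (-s) := by
        have := Real.rpow_le_rpow_of_nonpos (by positivity : 0 < x + 1)
          (by linarith : x + 1 ≤ 2 * x) (neg_nonpos.2 hs)
        gcongr

theorem exists_norm_le_mul_add_one_rpow_neg {f : ℝ → E} {M s : ℝ} (hs : 0 ≤ s)
    (hbdd : ∀ x > 0, ‖f x‖ ≤ M) (hdecay : f =O[atTop] fun x => x ^ (-s)) :
    ∃ C ≥ 0, ∀ x > 0, ‖f x‖ ≤ C * (x + 1) ^ (-s) := by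
  obtain ⟨c, hc, hbound⟩ := hdecay.exists_nonneg
  obtain ⟨x₀, hx₀, htail⟩ := (atTop_basis' (1 : ℝ)).eventually_iff.1 hbound.bound
  have hM : 0 ≤ M := (norm_nonneg _).trans (hbdd 1 one_pos)
  refine ⟨M * (x₀ + 1) ^ s + c * 2 ^ s, by positivity, fun x hx => ?_⟩
  rw [add_mul, mul_assoc M, mul_assoc c]
  rcases le_total x x₀ with hle | hge
  · have hnear : 1 ≤ (x₀ + 1) ^ s * (x + 1) ^ (-s) := by
      rw [Real.rpow_neg (by positivity), ← div_eq_mul_inv, one_le_div (by positivity)]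
      gcongr
    calc ‖f x‖ ≤ M * ((x₀ + 1) ^ s * (x + 1) ^ (-s)) :=
          (hbdd x hx).trans (le_mul_of_one_le_right hM hnear)
      _ ≤ _ := le_add_of_nonneg_right (by positivity)
  · calc ‖f x‖ ≤ c * x ^ (-s) := by
          simpa only [Real.norm_of_nonneg (Real.rpow_nonneg hx.le _)] using htail hge
      _ ≤ c * (2 ^ s * (x + 1) ^ (-s)) := by
          gcongr
          exact rpow_neg_le_two_rpow_mul_add_one_rpow_neg (hx₀.trans hge) hs
      _ ≤ _ := le_add_of_nonneg_left (by positivity)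

theorem hasAntitoneMajorant_of_isBigO_rpow {f : ℝ → E} {M s : ℝ} (hs : 1 < s)
    (hbdd : ∀ x > 0, ‖f x‖ ≤ M) (hdecay : f =O[atTop] fun x => x ^ (-s)) :
    HasAntitoneMajorant f := by
  obtain ⟨C, hC, hfC⟩ := exists_norm_le_mul_add_one_rpow_neg (by linarith) hbdd hdecay
  refine ⟨fun x => C * (x + 1) ^ (-s), ?_, ?_, hfC⟩
  · intro x (hx : 0 < x) y _ hxy
    exact mul_le_mul_of_nonneg_left
      (Real.rpow_le_rpow_of_nonpos (by positivity) (by linarith) (by linarith)) hC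
  · exact (integrableOn_add_rpow_Ioi_of_lt (by linarith) (by norm_num)).const_mul C

theorem le_natCeil_mul_div {x p : ℝ} (hp : 0 < p) : x ≤ ⌈x * p⌉₊ / p :=
  (le_div_iff₀ hp).2 (Nat.le_ceil _)

theorem stronglyMeasurable_comp_natCeil_mul {Y : Type*} [TopologicalSpace Y] (h : ℕ → Y) (p : ℝ) :
    StronglyMeasurable fun x : ℝ => h ⌈x * p⌉₊ :=
  StronglyMeasurable.of_discrete.comp_measurable
    (Nat.measurable_ceil.comp (measurable_id.mul_const p))

variable [NormedSpace ℝ E] [CompleteSpace E]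

theorem integral_Ioi_comp_natCeil {h : ℕ → E}
    (hint : IntegrableOn (fun x : ℝ => h ⌈x⌉₊) (Set.Ioi 0)) :
    ∫ x in Set.Ioi (0 : ℝ), h ⌈x⌉₊ = ∑' j : ℕ, h (j + 1) := by
  have hunion : Set.Ioi (0 : ℝ) = ⋃ j : ℕ, Nat.ceil ⁻¹' {j + 1} := by
    ext x
    simp [← Nat.ceil_pos, Nat.exists_eq_add_one]
  have hmeas (j : ℕ) : MeasurableSet (Nat.ceil ⁻¹' {j + 1} : Set ℝ) :=
    Nat.measurable_ceil (measurableSet_singleton _)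
  have hdisj : Pairwise (Function.onFun Disjoint
      fun j : ℕ => (Nat.ceil ⁻¹' {j + 1} : Set ℝ)) := fun i j hij =>
    Disjoint.preimage _ (by simpa using hij)
  have hpiece (j : ℕ) : ∫ x in (Nat.ceil ⁻¹' {j + 1} : Set ℝ), h ⌈x⌉₊ = h (j + 1) := by
    rw [setIntegral_congr_fun (hmeas j) fun x (hx : ⌈x⌉₊ = j + 1) => congrArg h hx,
      setIntegral_const, Nat.preimage_ceil_of_ne_zero j.succ_ne_zero]
    simp
  rw [hunion] at hint ⊢
  rw [← (hasSum_integral_iUnion hmeas hdisj hint).tsum_eq]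
  exact tsum_congr hpiece

theorem integral_Ioi_comp_natCeil_mul {h : ℕ → E} {p : ℝ} (hp : 0 < p)
    (hint : IntegrableOn (fun x => h ⌈x * p⌉₊) (Set.Ioi 0)) :
    ∫ x in Set.Ioi 0, h ⌈x * p⌉₊ = p⁻¹ • ∑' j : ℕ, h (j + 1) := by
  have hint₁ : IntegrableOn (fun x : ℝ => h ⌈x⌉₊) (Set.Ioi 0) := by
    simpa only [zero_mul] using
      (integrableOn_Ioi_comp_mul_right_iff (fun x : ℝ => h ⌈x⌉₊) 0 hp).1 hint
  rw [integral_comp_mul_right_Ioi (fun x : ℝ => h ⌈x⌉₊) 0 hp, zero_mul,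
    integral_Ioi_comp_natCeil hint₁]

theorem HasAntitoneMajorant.tendsto_weighted_riemannSum {ι : Type*} {l : Filter ι}
    [l.IsCountablyGenerated] {f : ℝ → E} (hf : HasAntitoneMajorant f)
    (hcont : ∀ᵐ x ∂volume.restrict (Set.Ioi 0), ContinuousAt f x)
    {p : ι → ℝ} (hp : Tendsto p l atTop) {w : ι → ℕ → ℝ} {C : ℝ} (hwC : ∀ i j, |w i j| ≤ C)
    (hw : ∀ x > 0, Tendsto (fun i => w i ⌈x * p i⌉₊) l (𝓝 1)) :
    Tendsto (fun i => (p i)⁻¹ • ∑' j : ℕ, w i (j + 1) • f ((j + 1 : ℕ) / p i)) l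
      (𝓝 (∫ x in Set.Ioi 0, f x)) := by
  obtain ⟨g, hanti, hg, hfg⟩ := hf
  let h (i : ι) (j : ℕ) : E := w i j • f (j / p i)
  have hmeas (i : ι) : AEStronglyMeasurable (fun x => h i ⌈x * p i⌉₊)
      (volume.restrict (Set.Ioi 0)) :=
    (stronglyMeasurable_comp_natCeil_mul (h i) (p i)).aestronglyMeasurable
  have hdom {i : ι} (hpi : 0 < p i) :
      ∀ᵐ x ∂volume.restrict (Set.Ioi 0), ‖h i ⌈x * p i⌉₊‖ ≤ C * g x := by
    refine ae_restrict_of_forall_mem measurableSet_Ioi fun x (hx : 0 < x) => ?_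
    have hxy : x ≤ ⌈x * p i⌉₊ / p i := le_natCeil_mul_div hpi
    have hy : 0 < ⌈x * p i⌉₊ / p i := hx.trans_le hxy
    rw [norm_smul]
    exact mul_le_mul (hwC i _) ((hfg _ hy).trans (hanti hx hy hxy)) (norm_nonneg _)
      ((abs_nonneg _).trans (hwC i 0))
  have hlim : ∀ᵐ x ∂volume.restrict (Set.Ioi 0),
      Tendsto (fun i => h i ⌈x * p i⌉₊) l (𝓝 (f x)) := by
    filter_upwards [hcont, ae_restrict_mem measurableSet_Ioi] with x hfx hx
    have hy : Tendsto (fun i => ⌈x * p i⌉₊ / p i) l (𝓝 x) :=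
      (tendsto_nat_ceil_mul_div_atTop (le_of_lt hx)).comp hp
    simpa only [one_smul, Function.comp_def] using (hw x hx).smul (hfx.tendsto.comp hy)
  have hpos : ∀ᶠ i in l, 0 < p i := hp.eventually_gt_atTop 0
  refine (tendsto_integral_filter_of_dominated_convergence _ (.of_forall hmeas)
    (hpos.mono fun _ => hdom) (hg.const_mul C) hlim).congr' ?_
  filter_upwards [hpos] with i hpi
  exact integral_Ioi_comp_natCeil_mul hpi ((hg.const_mul C).mono' (hmeas i) (hdom hpi))

end RiemannSums

section LagWeights

/-- The weight of the lag `j` in `Dn k p n`, extended by `0` to the lags outside `1, …, n - 2`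
so that `Dn` becomes a series over all positive lags. -/
def lagWeight (n : ℕ) : ℕ → ℝ :=
  (Set.Icc 1 (n - 2)).indicator fun j => (1 - (j : ℝ) / n) * (1 - ((j : ℝ) + 1) / n)

theorem Dn_eq_tsum_lagWeight (k : ℝ → ℝ) (p : ℝ) (n : ℕ) :
    Dn k p n = ∑' j : ℕ, lagWeight n (j + 1) • k ((j + 1 : ℕ) / p) ^ 4 := by
  have hvanish : ∀ j ∉ range (n - 2), lagWeight n (j + 1) • k ((j + 1 : ℕ) / p) ^ 4 = 0 := by
    intro j hj
    rw [lagWeight, Set.indicator_of_notMem (by simp_all), zero_smul]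
  rw [tsum_eq_sum hvanish, range_eq_Ico,
    Finset.sum_Ico_add' (fun j : ℕ => lagWeight n j • k (j / p) ^ 4), zero_add,
    Finset.Ico_add_one_right_eq_Icc]
  refine Finset.sum_congr rfl fun j hj => ?_
  rw [lagWeight, Set.indicator_of_mem (by simpa using hj), smul_eq_mul]

theorem abs_lagWeight_le_one (n j : ℕ) : |lagWeight n j| ≤ 1 := by
  by_cases hj : j ∈ Set.Icc 1 (n - 2)
  · have hj₁ : 1 ≤ j ∧ j ≤ n - 2 := hj
    have hjn : (j : ℝ) + 1 ≤ n := by exact_mod_cast (by omega : j + 1 ≤ n)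
    have hfactor {t : ℝ} (ht₀ : 0 ≤ t) (htn : t ≤ n) : |1 - t / n| ≤ 1 := by
      have h₀ : 0 ≤ t / n := by positivity
      have h₁ : t / n ≤ 1 := div_le_one_of_le₀ htn n.cast_nonneg
      exact abs_le.2 ⟨by linarith, by linarith⟩
    rw [lagWeight, Set.indicator_of_mem hj, abs_mul]
    exact mul_le_one₀ (hfactor (by positivity) (by linarith)) (abs_nonneg _)
      (hfactor (by positivity) hjn)
  · rw [lagWeight, Set.indicator_of_notMem hj, abs_zero]
    exact zero_le_one

theorem tendsto_lagWeight {j : ℕ → ℕ} (hj : ∀ᶠ n in atTop, 0 < j n)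
    (hjn : Tendsto (fun n => (j n : ℝ) / n) atTop (𝓝 0)) :
    Tendsto (fun n => lagWeight n (j n)) atTop (𝓝 1) := by
  have hjn' : Tendsto (fun n => ((j n : ℝ) + 1) / n) atTop (𝓝 0) := by
    simpa only [add_div, add_zero] using hjn.add (tendsto_one_div_atTop_nhds_zero_nat (𝕜 := ℝ))
  have hprod : Tendsto (fun n : ℕ => (1 - (j n : ℝ) / n) * (1 - ((j n : ℝ) + 1) / n))
      atTop (𝓝 1) := by
    simpa using (hjn.const_sub 1).mul (hjn'.const_sub 1)
  refine hprod.congr' ?_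
  filter_upwards [hj, hjn'.eventually_lt_const one_pos, eventually_gt_atTop 0] with n hpos hlt hn
  have hlt' : j n + 1 < n := by
    rw [div_lt_one (by positivity)] at hlt
    exact_mod_cast hlt
  rw [lagWeight, Set.indicator_of_mem (Set.mem_Icc.2 (by omega))]

theorem tendsto_lagWeight_natCeil_mul {p : ℕ → ℝ} (hp : Tendsto p atTop atTop)
    (hpn : Tendsto (fun n => p n / (n : ℝ)) atTop (𝓝 0)) {x : ℝ} (hx : 0 < x) :
    Tendsto (fun n => lagWeight n ⌈x * p n⌉₊) atTop (𝓝 1) := by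
  have hpos : ∀ᶠ n in atTop, 0 < p n := hp.eventually_gt_atTop 0
  refine tendsto_lagWeight (hpos.mono fun n hn => Nat.ceil_pos.2 (mul_pos hx hn)) ?_
  have hprod := ((tendsto_nat_ceil_mul_div_atTop hx.le).comp hp).mul hpn
  rw [mul_zero] at hprod
  exact hprod.congr' (hpos.mono fun n hn => div_mul_div_cancel₀ hn.ne')

end LagWeights

theorem Dn_div_p_tendsto_general {k : ℝ → ℝ} (hk : HasAntitoneMajorant fun x => k x ^ 4)
    (hcont : ∀ᵐ x ∂volume.restrict (Set.Ioi 0), ContinuousAt k x)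
    {p : ℕ → ℝ} (hp : Tendsto p atTop atTop)
    (hpn : Tendsto (fun n => p n / (n : ℝ)) atTop (𝓝 0)) :
    IntegrableOn (fun x => k x ^ 4) (Set.Ioi (0 : ℝ)) ∧
    Tendsto (fun n => Dn k (p n) n / p n) atTop (𝓝 (∫ x in Set.Ioi (0 : ℝ), k x ^ 4)) := by
  have hcont₄ : ∀ᵐ x ∂volume.restrict (Set.Ioi 0), ContinuousAt (fun x => k x ^ 4) x :=
    hcont.mono fun _ hx => hx.pow 4
  refine ⟨hk.integrableOn (aestronglyMeasurable_of_ae_continuousAt hcont₄), ?_⟩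
  simp only [Dn_eq_tsum_lagWeight, div_eq_inv_mul (∑' _ : ℕ, _)]
  exact hk.tendsto_weighted_riemannSum hcont₄ hp abs_lagWeight_le_one
    fun _ hx => tendsto_lagWeight_natCeil_mul hp hpn hx

theorem IsKernel.hasAntitoneMajorant_pow_four {k : ℝ → ℝ} (hk : IsKernel k) :
    HasAntitoneMajorant fun x => k x ^ 4 := by
  obtain ⟨hbdd, -, -, -, -, α, hα, c, -, x₀, -, hdecay⟩ := hk
  have hO : k =O[atTop] fun x => x ^ (-α) := by
    refine .of_bound c ?_
    filter_upwards [eventually_ge_atTop x₀, eventually_ge_atTop 0] with x hx hx0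
    simpa [abs_of_nonneg (Real.rpow_nonneg hx0 _)] using hdecay x hx
  have hO₄ : (fun x => k x ^ 4) =O[atTop] fun x => x ^ (-(4 * α)) := by
    refine (hO.pow 4).congr' .rfl ?_
    filter_upwards [eventually_ge_atTop 0] with x hx
    rw [← Real.rpow_mul_natCast hx]
    congr 1
    push_cast
    ring
  refine hasAntitoneMajorant_of_isBigO_rpow (M := 1) (by linarith) (fun x _ => ?_) hO₄
  rw [norm_pow]
  exact pow_le_one₀ (norm_nonneg _) (abs_le.2 (hbdd x))

theorem IsKernel.ae_continuousAt {k : ℝ → ℝ} (hk : IsKernel k) : ∀ᵐ x, ContinuousAt k x :=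
  hk.2.2.2.2.1.measure_zero volume

/-- **Remark 2.2**: for a kernel `k` and bandwidth `(p_n)`, `k⁴` is integrable on
`(0,∞)` and `D_n(k)/p_n → D(k) = ∫₀^∞ k(x)⁴ dx`, i.e. `D_n(k) = D(k) p_n + o(p_n)`. -/
theorem Dn_div_p_tendsto
    (k : ℝ → ℝ) (hk : IsKernel k) (p : ℕ → ℝ) (hp : IsBandwidth p) :
    IntegrableOn (fun x => k x ^ 4) (Set.Ioi (0 : ℝ)) ∧
    Tendsto (fun n => Dn k (p n) n / p n) atTop
      (𝓝 (∫ x in Set.Ioi (0 : ℝ), k x ^ 4)) :=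
  Dn_div_p_tendsto_general hk.hasAntitoneMajorant_pow_four
    (ae_restrict_of_ae hk.ae_continuousAt) hp.2.1 hp.2.2

end
end

section
/- Let k be a kernel and (p_n) a bandwidth, and define C_n(k) = Σ_{j=1}^{n−1} (1−j/n)·k(j/p_n)². Then n^{-1}·C_n(k) → 0 as n → ∞. -/
open MeasureTheory Filter Finset Topology

noncomputable section

/-!
Since the weights lie in `[0, 1]`, `n⁻¹ C_n(k)` is at most the average of the values of `k²` at the
points `j / p_n`, `1 ≤ j ≤ n`. For every `M`, only `M p_n = o(n)` of these points lie in `(0, M]`,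
where `k²` is bounded, and beyond a large enough `M` the values of `k²` are as small as desired.
-/

lemma card_filter_natCast_le_le {R : Type*} [Semiring R] [LinearOrder R] [IsStrictOrderedRing R]
    [FloorSemiring R] {r : R} (hr : 0 ≤ r) (n : ℕ) :
    (#{j ∈ Icc 1 n | ((j : ℕ) : R) ≤ r} : R) ≤ r := by
  have hsub : {j ∈ Icc 1 n | ((j : ℕ) : R) ≤ r} ⊆ Icc 1 ⌊r⌋₊ := fun j hj => by
    obtain ⟨hjn, hjr⟩ := mem_filter.1 hj
    exact mem_Icc.2 ⟨(mem_Icc.1 hjn).1, Nat.le_floor hjr⟩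
  have hcard : #{j ∈ Icc 1 n | ((j : ℕ) : R) ≤ r} ≤ ⌊r⌋₊ := by simpa using card_le_card hsub
  exact (Nat.cast_le.2 hcard).trans (Nat.floor_le hr)

section SampleAverage

variable {E : Type*} [SeminormedAddGroup E] {f : ℝ → E} {B : ℝ}

lemma sum_norm_comp_div_le {M ε p : ℝ} (hB : ∀ x > 0, ‖f x‖ ≤ B) (hM : 0 ≤ M)
    (hε : ∀ x > M, ‖f x‖ ≤ ε) (hp : 0 < p) (n : ℕ) :
    ∑ j ∈ Icc 1 n, ‖f (j / p)‖ ≤ M * p * B + n * ε := by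
  have hB₀ : 0 ≤ B := (norm_nonneg _).trans (hB 1 one_pos)
  have hε₀ : 0 ≤ ε := (norm_nonneg _).trans (hε (M + 1) (lt_add_one M))
  have hnear : ∑ j ∈ Icc 1 n with ((j : ℕ) : ℝ) ≤ M * p, ‖f (j / p)‖ ≤ M * p * B :=
    calc ∑ j ∈ Icc 1 n with ((j : ℕ) : ℝ) ≤ M * p, ‖f (j / p)‖
        ≤ #{j ∈ Icc 1 n | ((j : ℕ) : ℝ) ≤ M * p} * B := by
          rw [← nsmul_eq_mul]
          refine sum_le_card_nsmul _ _ _ fun j hj => hB _ (div_pos ?_ hp)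
          exact Nat.cast_pos.2 (mem_Icc.1 (mem_filter.1 hj).1).1
      _ ≤ M * p * B :=
          mul_le_mul_of_nonneg_right (card_filter_natCast_le_le (by positivity) n) hB₀
  have hfar : ∑ j ∈ Icc 1 n with ¬ ((j : ℕ) : ℝ) ≤ M * p, ‖f (j / p)‖ ≤ n * ε :=
    calc ∑ j ∈ Icc 1 n with ¬ ((j : ℕ) : ℝ) ≤ M * p, ‖f (j / p)‖
        ≤ #{j ∈ Icc 1 n | ¬ ((j : ℕ) : ℝ) ≤ M * p} * ε := by
          rw [← nsmul_eq_mul]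
          refine sum_le_card_nsmul _ _ _ fun j hj => hε _ ?_
          exact (lt_div_iff₀ hp).2 (not_le.1 (mem_filter.1 hj).2)
      _ ≤ n * ε := by
          have hcard : #{j ∈ Icc 1 n | ¬ ((j : ℕ) : ℝ) ≤ M * p} ≤ n := by
            simpa using card_filter_le (Icc 1 n) fun j : ℕ => ¬ (j : ℝ) ≤ M * p
          gcongr
  rw [← sum_filter_add_sum_filter_not (Icc 1 n) fun j : ℕ => (j : ℝ) ≤ M * p]
  exact add_le_add hnear hfar

lemma tendsto_average_norm_comp_div {p : ℕ → ℝ} (hB : ∀ x > 0, ‖f x‖ ≤ B)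
    (hf : Tendsto (fun x => ‖f x‖) atTop (𝓝 0)) (hp : ∀ᶠ n in atTop, 0 < p n)
    (hpn : Tendsto (fun n => p n / n) atTop (𝓝 0)) :
    Tendsto (fun n : ℕ => (n : ℝ)⁻¹ * ∑ j ∈ Icc 1 n, ‖f (j / p n)‖) atTop (𝓝 0) := by
  refine tendsto_order.2 ⟨fun a ha => .of_forall fun n => ha.trans_le (by positivity),
    fun ε hε => ?_⟩
  obtain ⟨M, hM₀, hM⟩ : ∃ M ≥ 0, ∀ x > M, ‖f x‖ ≤ ε / 2 := by
    obtain ⟨M, hM⟩ := eventually_atTop.1 (hf.eventually_le_const (half_pos hε))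
    exact ⟨max M 0, le_max_right M 0, fun x hx => hM x ((le_max_left M 0).trans hx.le)⟩
  have hbound : Tendsto (fun n : ℕ => M * B * (p n / n) + ε / 2) atTop (𝓝 (ε / 2)) := by
    simpa using (hpn.const_mul (M * B)).add_const (ε / 2)
  filter_upwards [hp, hbound.eventually_lt_const (half_lt_self hε), eventually_gt_atTop 0]
    with n hpos hlt hn
  have hn₀ : (n : ℝ) ≠ 0 := Nat.cast_ne_zero.2 hn.ne'
  calc (n : ℝ)⁻¹ * ∑ j ∈ Icc 1 n, ‖f (j / p n)‖
      ≤ (n : ℝ)⁻¹ * (M * p n * B + n * (ε / 2)) := by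
        gcongr
        exact sum_norm_comp_div_le hB hM₀ hM hpos n
    _ = M * B * (p n / n) + ε / 2 := by field_simp
    _ < ε := hlt

end SampleAverage

lemma one_sub_div_natCast_mem_Icc {j n : ℕ} (hj : j ≤ n) :
    1 - (j : ℝ) / n ∈ Set.Icc (0 : ℝ) 1 :=
  Set.Icc.mem_iff_one_sub_mem.1
    ⟨by positivity, div_le_one_of_le₀ (Nat.cast_le.2 hj) n.cast_nonneg⟩

namespace Cn

lemma nonneg (k : ℝ → ℝ) (p : ℝ) (n : ℕ) : 0 ≤ Cn k p n :=
  sum_nonneg fun _ hj => mul_nonneg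
    (one_sub_div_natCast_mem_Icc ((mem_Icc.1 hj).2.trans (n.sub_le 1))).1 (sq_nonneg _)

lemma le_sum_sq (k : ℝ → ℝ) (p : ℝ) (n : ℕ) : Cn k p n ≤ ∑ j ∈ Icc 1 n, k (j / p) ^ 2 :=
  calc Cn k p n ≤ ∑ j ∈ Icc 1 (n - 1), k (j / p) ^ 2 :=
        sum_le_sum fun _ hj => mul_le_of_le_one_left (sq_nonneg _)
          (one_sub_div_natCast_mem_Icc ((mem_Icc.1 hj).2.trans (n.sub_le 1))).2
    _ ≤ ∑ j ∈ Icc 1 n, k (j / p) ^ 2 :=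
        sum_le_sum_of_subset_of_nonneg (Icc_subset_Icc_right (n.sub_le 1))
          fun _ _ _ => sq_nonneg _

end Cn

theorem Cn_div_n_tendsto_zero_general {k : ℝ → ℝ} {B : ℝ} (hB : ∀ x > 0, |k x| ≤ B)
    (hk : Tendsto k atTop (𝓝 0)) {p : ℕ → ℝ} (hp : ∀ᶠ n in atTop, 0 < p n)
    (hpn : Tendsto (fun n => p n / (n : ℝ)) atTop (𝓝 0)) :
    Tendsto (fun n : ℕ => (n : ℝ)⁻¹ * Cn k (p n) n) atTop (𝓝 0) := by
  have hB_sq : ∀ x > 0, ‖k x ^ 2‖ ≤ B ^ 2 := fun x hx => by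
    simpa using pow_le_pow_left₀ (abs_nonneg _) (hB x hx) 2
  have hk_sq : Tendsto (fun x => ‖k x ^ 2‖) atTop (𝓝 0) := by simpa using (hk.pow 2).norm
  refine squeeze_zero (fun n => mul_nonneg (by positivity) (Cn.nonneg k (p n) n)) (fun n => ?_)
    (tendsto_average_norm_comp_div hB_sq hk_sq hp hpn)
  simpa using mul_le_mul_of_nonneg_left (Cn.le_sum_sq k (p n) n) (inv_nonneg.2 n.cast_nonneg)

lemma IsKernel.abs_le_one {k : ℝ → ℝ} (hk : IsKernel k) (x : ℝ) : |k x| ≤ 1 :=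
  abs_le.2 (hk.1 x)

lemma IsKernel.tendsto_atTop_zero {k : ℝ → ℝ} (hk : IsKernel k) : Tendsto k atTop (𝓝 0) := by
  obtain ⟨-, -, -, -, -, α, hα, c, -, x₀, -, hdecay⟩ := hk
  have hα₀ : 0 < α := one_half_pos.trans hα
  refine squeeze_zero_norm' ((eventually_ge_atTop x₀).mono hdecay) ?_
  simpa using (tendsto_rpow_neg_atTop hα₀).const_mul c

/-- For a kernel `k` and bandwidth `(p_n)`, `n⁻¹ C_n(k) → 0` as `n → ∞`. -/
theorem Cn_div_n_tendsto_zero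
    (k : ℝ → ℝ) (hk : IsKernel k) (p : ℕ → ℝ) (hp : IsBandwidth p) :
    Tendsto (fun (n : ℕ) => (n : ℝ)⁻¹ * Cn k (p n) n) atTop (𝓝 0) :=
  Cn_div_n_tendsto_zero_general (fun x _ => hk.abs_le_one x) hk.tendsto_atTop_zero
    (.of_forall hp.1) hp.2.2

end
end
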